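/- arXiv:1904.13317 — 6 statements merged into one kernel-verified Lean document; each statement's English description precedes it below -/
import Mathlib

section
/- Consider a serial manipulator with n joints, each either revolute or prismatic, whose inverse dynamics is computed through the rigid body model tau(q,qdot,qddot) = B(q) qddot + C(q,qdot) qdot + g(q) (with B, C, g defined from the Denavit–Hartenberg forward kinematics as in the context). Then for every joint i, the i-th torque component tau_i is a polynomial function of the augmented variables x̄ = (q_c, q_s, q_p, qdot_v, qddot): there exists a real multivariate polynomial P_i, of total degree at most 2n+1, such that tau_i(q,qdot,qddot) = P_i evaluated at c_r = cos(q_r), s_r = sin(q_r) (r ∈ I_r), x_p = q_p (p ∈ I_p), v_{jk} = qdot_j qdot_k (1 ≤ j ≤ k ≤ n), a_k = qddot_k (1 ≤ k ≤ n), and such that in every monomial of P_i: each c_r, s_r and x_p appears with degree at most 2, each v_{jk} and a_k appears with degree at most 1, and moreover deg(c_b) + deg(s_b) ≤ 2 for every revolute joint b. -/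
/-!
Call a function of `q` a *trigonometric polynomial* of block degree at most `D` if it is a
polynomial in `cos q_b`, `sin q_b` (`b` revolute) and `q_b` (`b` prismatic) whose monomials use at
most `D b` factors attached to joint `b`, for each `b`. These functions (`TrigPoly`) are built from
constants and generators by sums and products, block degrees adding up under products, and they are
stable under partial derivatives **without raising the block degree** (`TrigPoly.pd`), because
differentiation sends `cos` to `-sin`, `sin` to `cos` and a coordinate to `1`.

The entries of `R_b^{b-1}` and of `l_b^{b-1}` have block degree at most one at `b` and zero
elsewhere, so the centers of mass, and hence the linear Jacobians, have block degree at most one at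
every joint; the linear part of `B` therefore has block degree at most two. For the angular part,
multiplying out `J_ω,iᵀ R_i^0` naively would give block degree two already, but orthogonality of
rotations gives `(R_{j-1}^0)ᵀ R_i^0 = R_j^{j-1} ⋯ R_i^{i-1}`, which has block degree at most one
(`trigPoly_R0_rel`). So every entry of `B` has block degree at most two, and so do its partial
derivatives and the gravity term (`trigPoly_B`, `trigPoly_Com`).

Finally `τ_i` is a sum of such functions, each multiplied by at most one of the variables `a_k`,
`v_{jk}`; replacing the generators by formal variables gives `P`, of total degree at most
`2 * n + 1`, two for each joint and one for the dynamic variable (`Representable`).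
-/


noncomputable section

open Matrix Real

/-- Elementary rotation about the z-axis. -/
def RzMat (θ : ℝ) : Matrix (Fin 3) (Fin 3) ℝ :=
  !![Real.cos θ, -Real.sin θ, 0;
     Real.sin θ, Real.cos θ, 0;
     0, 0, 1]

/-- Elementary rotation about the x-axis. -/
def RxMat (α : ℝ) : Matrix (Fin 3) (Fin 3) ℝ :=
  !![1, 0, 0;
     0, Real.cos α, -Real.sin α;
     0, Real.sin α, Real.cos α]

/-- DH joint angle `θ_b(q)`; `rev b = true` means that joint `b` is revolute
(`θ_b = θ0_b + q_b`), otherwise it is prismatic (`θ_b = θ0_b`). -/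
def dhTheta {n : ℕ} (rev : Fin n → Bool) (θ0 : Fin n → ℝ) (q : Fin n → ℝ) (b : Fin n) : ℝ :=
  θ0 b + if rev b then q b else 0

/-- DH joint offset `d_b(q)`: `d_b = d0_b` for a revolute joint, `d_b = d0_b + q_b`
for a prismatic one. -/
def dhD {n : ℕ} (rev : Fin n → Bool) (d0 : Fin n → ℝ) (q : Fin n → ℝ) (b : Fin n) : ℝ :=
  d0 b + if rev b then 0 else q b

/-- Relative link rotation `R_b^{b-1}(q) = R_z(θ_b) R_x(α_b)`
(0-based index `b : Fin n` for joint `b+1`). -/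
def dhRrel {n : ℕ} (rev : Fin n → Bool) (θ0 αDH : Fin n → ℝ) (q : Fin n → ℝ) (b : Fin n) :
    Matrix (Fin 3) (Fin 3) ℝ :=
  RzMat (dhTheta rev θ0 q b) * RxMat (αDH b)

/-- Cumulative rotation `R_i^0(q) = R_1^0(q) ⋯ R_i^{i-1}(q)` (meaningful for `i ≤ n`),
with `R_0^0 = 1`. -/
def dhR0 {n : ℕ} (rev : Fin n → Bool) (θ0 αDH : Fin n → ℝ) (q : Fin n → ℝ) :
    ℕ → Matrix (Fin 3) (Fin 3) ℝ
  | 0 => 1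
  | j + 1 =>
      dhR0 rev θ0 αDH q j * (if h : j < n then dhRrel rev θ0 αDH q ⟨j, h⟩ else 1)

/-- Relative link translation `l_b^{b-1}(q) = (0,0,d_b)ᵀ + R_z(θ_b) (a_b,0,0)ᵀ`. -/
def dhLrel {n : ℕ} (rev : Fin n → Bool) (θ0 d0 aDH : Fin n → ℝ) (q : Fin n → ℝ) (b : Fin n) :
    Fin 3 → ℝ :=
  ![0, 0, dhD rev d0 q b] + (RzMat (dhTheta rev θ0 q b)).mulVec ![aDH b, 0, 0]

/-- Center of mass `c_i(q) = Σ_{j=1}^{i} R_{j-1}^0(q) l_j^{j-1}(q) + R_i^0(q) c_i^i`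
(0-based index `i : Fin n` for link `i+1`; `cloc i` is the constant `c_i^i`). -/
def dhCom {n : ℕ} (rev : Fin n → Bool) (θ0 d0 aDH αDH : Fin n → ℝ)
    (cloc : Fin n → Fin 3 → ℝ) (q : Fin n → ℝ) (i : Fin n) : Fin 3 → ℝ :=
  (∑ j : Fin n, if j ≤ i then (dhR0 rev θ0 αDH q j.val).mulVec (dhLrel rev θ0 d0 aDH q j) else 0)
    + (dhR0 rev θ0 αDH q (i.val + 1)).mulVec (cloc i)

/-- Partial derivative of `f : ℝⁿ → ℝ` with respect to the `k`-th coordinate, at `q`. -/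
def pd {n : ℕ} (f : (Fin n → ℝ) → ℝ) (k : Fin n) (q : Fin n → ℝ) : ℝ :=
  deriv (fun t => f (Function.update q k t)) (q k)

/-- Linear Jacobian `J_i(q) ∈ ℝ^{3×n}`, whose `k`-th column is `∂c_i/∂q_k`. -/
def dhJlin {n : ℕ} (rev : Fin n → Bool) (θ0 d0 aDH αDH : Fin n → ℝ)
    (cloc : Fin n → Fin 3 → ℝ) (q : Fin n → ℝ) (i : Fin n) : Matrix (Fin 3) (Fin n) ℝ :=
  Matrix.of fun r k => pd (fun q' => dhCom rev θ0 d0 aDH αDH cloc q' i r) k q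

/-- Angular Jacobian `J_{ω,i}(q) ∈ ℝ^{3×n}`: the `j`-th column is `λ_j R_{j-1}^0(q) e_3`
for `j ≤ i` and `0` for `j > i`, where `λ_j = 1` iff joint `j` is revolute. -/
def dhJang {n : ℕ} (rev : Fin n → Bool) (θ0 αDH : Fin n → ℝ) (q : Fin n → ℝ) (i : Fin n) :
    Matrix (Fin 3) (Fin n) ℝ :=
  Matrix.of fun r j =>
    if j ≤ i then
      (if rev j then (1 : ℝ) else 0) * (dhR0 rev θ0 αDH q j.val).mulVec ![0, 0, 1] r
    else 0

/-- Inertia matrix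
`B(q) = Σ_i [ m_i J_i(q)ᵀ J_i(q) + J_{ω,i}(q)ᵀ R_i^0(q) I_i (R_i^0(q))ᵀ J_{ω,i}(q) ]`. -/
def dhB {n : ℕ} (rev : Fin n → Bool) (θ0 d0 aDH αDH : Fin n → ℝ)
    (cloc : Fin n → Fin 3 → ℝ) (m : Fin n → ℝ) (Iner : Fin n → Matrix (Fin 3) (Fin 3) ℝ)
    (q : Fin n → ℝ) : Matrix (Fin n) (Fin n) ℝ :=
  ∑ i : Fin n,
    (m i • ((dhJlin rev θ0 d0 aDH αDH cloc q i)ᵀ * dhJlin rev θ0 d0 aDH αDH cloc q i)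
      + (dhJang rev θ0 αDH q i)ᵀ * dhR0 rev θ0 αDH q (i.val + 1) * Iner i *
          (dhR0 rev θ0 αDH q (i.val + 1))ᵀ * dhJang rev θ0 αDH q i)

/-- `i`-th component of the Coriolis contribution
`(C(q,q̇) q̇)_i = Σ_j Σ_k ( ∂b_{ij}/∂q_k − (1/2) ∂b_{jk}/∂q_i ) q̇_k q̇_j`. -/
def dhCor {n : ℕ} (rev : Fin n → Bool) (θ0 d0 aDH αDH : Fin n → ℝ)
    (cloc : Fin n → Fin 3 → ℝ) (m : Fin n → ℝ) (Iner : Fin n → Matrix (Fin 3) (Fin 3) ℝ)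
    (q qd : Fin n → ℝ) (i : Fin n) : ℝ :=
  ∑ j : Fin n, ∑ k : Fin n,
    (pd (fun q' => dhB rev θ0 d0 aDH αDH cloc m Iner q' i j) k q
        - (1 / 2) * pd (fun q' => dhB rev θ0 d0 aDH αDH cloc m Iner q' j k) i q)
      * qd k * qd j

/-- Potential energy `U(q) = Σ_j m_j g_0ᵀ c_j(q)`. -/
def dhU {n : ℕ} (rev : Fin n → Bool) (θ0 d0 aDH αDH : Fin n → ℝ)
    (cloc : Fin n → Fin 3 → ℝ) (m : Fin n → ℝ) (g0 : Fin 3 → ℝ) (q : Fin n → ℝ) : ℝ :=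
  ∑ j : Fin n, m j * ∑ r : Fin 3, g0 r * dhCom rev θ0 d0 aDH αDH cloc q j r

/-- Gravity torque `g_i(q) = ∂U/∂q_i`. -/
def dhGrav {n : ℕ} (rev : Fin n → Bool) (θ0 d0 aDH αDH : Fin n → ℝ)
    (cloc : Fin n → Fin 3 → ℝ) (m : Fin n → ℝ) (g0 : Fin 3 → ℝ)
    (q : Fin n → ℝ) (i : Fin n) : ℝ :=
  pd (dhU rev θ0 d0 aDH αDH cloc m g0) i q

/-- Inverse dynamics torque `τ_i(q,q̇,q̈) = ( B(q) q̈ + C(q,q̇) q̇ + g(q) )_i`. -/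
def dhTau {n : ℕ} (rev : Fin n → Bool) (θ0 d0 aDH αDH : Fin n → ℝ)
    (cloc : Fin n → Fin 3 → ℝ) (m : Fin n → ℝ) (Iner : Fin n → Matrix (Fin 3) (Fin 3) ℝ)
    (g0 : Fin 3 → ℝ) (q qd qdd : Fin n → ℝ) (i : Fin n) : ℝ :=
  (∑ k : Fin n, dhB rev θ0 d0 aDH αDH cloc m Iner q i k * qdd k)
    + dhCor rev θ0 d0 aDH αDH cloc m Iner q qd i
    + dhGrav rev θ0 d0 aDH αDH cloc m g0 q i

/-- Formal position variables: `.inl b ↦ c_b = cos q_b`, `.inr (.inl b) ↦ s_b = sin q_b`,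
`.inr (.inr b) ↦ x_b = q_b`. -/
abbrev PosVar (n : ℕ) := Fin n ⊕ (Fin n ⊕ Fin n)

/-- The formal variable `c_b` (for `cos q_b`). -/
def cVar {n : ℕ} (b : Fin n) : PosVar n := Sum.inl b

/-- The formal variable `s_b` (for `sin q_b`). -/
def sVar {n : ℕ} (b : Fin n) : PosVar n := Sum.inr (Sum.inl b)

/-- The formal variable `x_b` (for the prismatic coordinate `q_b`). -/
def xVar {n : ℕ} (b : Fin n) : PosVar n := Sum.inr (Sum.inr b)

/-- Evaluation of the formal position variables at a configuration `q`. -/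
def posEval {n : ℕ} (q : Fin n → ℝ) : PosVar n → ℝ :=
  Sum.elim (fun b => Real.cos (q b)) (Sum.elim (fun b => Real.sin (q b)) fun b => q b)

/-- Index set of the velocity-product variables `v_{jk}`, `j ≤ k`. -/
abbrev VelIdx (n : ℕ) := {pr : Fin n × Fin n // pr.1 ≤ pr.2}

/-- Formal dynamic variables: the position variables together with the velocity products
`v_{jk}` and the accelerations `a_k`. -/
abbrev DynVar (n : ℕ) := PosVar n ⊕ (VelIdx n ⊕ Fin n)

/-- The formal variable `v_{jk}` (for `q̇_j q̇_k`). -/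
def vVar {n : ℕ} (jk : VelIdx n) : DynVar n := Sum.inr (Sum.inl jk)

/-- The formal variable `a_k` (for `q̈_k`). -/
def aVar {n : ℕ} (k : Fin n) : DynVar n := Sum.inr (Sum.inr k)

/-- Evaluation of the formal dynamic variables at `(q, q̇, q̈)`. -/
def dynEval {n : ℕ} (q qd qdd : Fin n → ℝ) : DynVar n → ℝ :=
  Sum.elim (posEval q) (Sum.elim (fun jk => qd jk.val.1 * qd jk.val.2) qdd)

/-! ### Trigonometric polynomials with bounded block degree -/

/-- `TrigPoly rev D f`: the function `f` of the configuration is a polynomial in `cos q_b`,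
`sin q_b` (`b` revolute) and `q_b` (`b` prismatic) such that, for each joint `b`, its monomials
contain at most `D b` factors attached to `b`. -/
inductive TrigPoly {n : ℕ} (rev : Fin n → Bool) : (Fin n → ℕ) → ((Fin n → ℝ) → ℝ) → Prop
  | const (c : ℝ) : TrigPoly rev 0 (fun _ => c)
  | cos (b : Fin n) (hb : rev b = true) :
      TrigPoly rev (Pi.single b 1) (fun q => Real.cos (q b))
  | sin (b : Fin n) (hb : rev b = true) :
      TrigPoly rev (Pi.single b 1) (fun q => Real.sin (q b))
  | coord (b : Fin n) (hb : rev b = false) : TrigPoly rev (Pi.single b 1) (fun q => q b)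
  | add {D : Fin n → ℕ} {f g : (Fin n → ℝ) → ℝ} (hf : TrigPoly rev D f) (hg : TrigPoly rev D g) :
      TrigPoly rev D (fun q => f q + g q)
  | mul {D D' : Fin n → ℕ} {f g : (Fin n → ℝ) → ℝ} (hf : TrigPoly rev D f)
      (hg : TrigPoly rev D' g) : TrigPoly rev (D + D') (fun q => f q * g q)
  | mono {D D' : Fin n → ℕ} {f : (Fin n → ℝ) → ℝ} (hD : D ≤ D') (hf : TrigPoly rev D f) :
      TrigPoly rev D' f

namespace TrigPoly

variable {n : ℕ} {rev : Fin n → Bool} {D D' : Fin n → ℕ} {f g : (Fin n → ℝ) → ℝ}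

lemma const' (c : ℝ) : TrigPoly rev D (fun _ => c) :=
  mono (fun b => Nat.zero_le (D b)) (const c)

lemma const_mul (c : ℝ) (hf : TrigPoly rev D f) : TrigPoly rev D (fun q => c * f q) :=
  mono (by simp) (mul (const c) hf)

lemma mul_const (hf : TrigPoly rev D f) (c : ℝ) : TrigPoly rev D (fun q => f q * c) :=
  mono (by simp) (mul hf (const c))

lemma neg (hf : TrigPoly rev D f) : TrigPoly rev D (fun q => -f q) := by
  simpa using hf.const_mul (-1)

lemma sub (hf : TrigPoly rev D f) (hg : TrigPoly rev D g) :
    TrigPoly rev D (fun q => f q - g q) := by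
  simpa [sub_eq_add_neg] using hf.add hg.neg

lemma sum {ι : Type*} (s : Finset ι) {F : ι → (Fin n → ℝ) → ℝ}
    (h : ∀ x ∈ s, TrigPoly rev D (F x)) : TrigPoly rev D (fun q => ∑ x ∈ s, F x q) := by
  classical
  induction s using Finset.induction_on with
  | empty => simpa using const' 0
  | insert a s ha ih =>
    simp only [Finset.sum_insert ha]
    exact (h a (by simp)).add (ih fun x hx => h x (by simp [hx]))

/-- Entries of a product of two matrices of trigonometric polynomials. -/
lemma matrix_mul {l m o : Type*} [Fintype m] {M : (Fin n → ℝ) → Matrix l m ℝ}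
    {N : (Fin n → ℝ) → Matrix m o ℝ}
    (hM : ∀ r s, TrigPoly rev D (fun q => M q r s))
    (hN : ∀ r s, TrigPoly rev D' (fun q => N q r s)) (r : l) (s : o) :
    TrigPoly rev (D + D') (fun q => (M q * N q) r s) := by
  simp only [Matrix.mul_apply]
  exact sum _ fun x _ => (hM r x).mul (hN x s)

lemma matrix_mulVec {l m : Type*} [Fintype m] {M : (Fin n → ℝ) → Matrix l m ℝ}
    {v : (Fin n → ℝ) → m → ℝ}
    (hM : ∀ r s, TrigPoly rev D (fun q => M q r s))
    (hv : ∀ s, TrigPoly rev D' (fun q => v q s)) (r : l) :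
    TrigPoly rev (D + D') (fun q => (M q).mulVec (v q) r) := by
  simp only [Matrix.mulVec, dotProduct]
  exact sum _ fun x _ => (hM r x).mul (hv x)

lemma differentiable (hf : TrigPoly rev D f) : Differentiable ℝ f := by
  induction hf with
  | const c => fun_prop
  | cos b hb => fun_prop
  | sin b hb => fun_prop
  | coord b hb => fun_prop
  | add _ _ ihf ihg => exact ihf.add ihg
  | mul _ _ ihf ihg => exact ihf.mul ihg
  | mono _ _ ih => exact ih

lemma differentiable_update (hf : TrigPoly rev D f) (q : Fin n → ℝ) (k : Fin n) :
    Differentiable ℝ (fun t => f (Function.update q k t)) :=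
  hf.differentiable.comp fun t => (hasDerivAt_update q k t).differentiableAt

/-- Partial derivatives do not raise any block degree. -/
lemma pd (hf : TrigPoly rev D f) (k : Fin n) : TrigPoly rev D (fun q => pd f k q) := by
  unfold _root_.pd
  induction hf with
  | const c => simpa using const' 0
  | cos b hb =>
    by_cases h : b = k
    · subst h
      simpa using (TrigPoly.sin b hb).neg
    · simpa [Function.update_of_ne h] using const' 0
  | sin b hb =>
    by_cases h : b = k
    · subst h
      simpa using TrigPoly.cos b hb
    · simpa [Function.update_of_ne h] using const' 0
  | coord b hb =>
    by_cases h : b = k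
    · subst h
      simpa using const' 1
    · simpa [Function.update_of_ne h] using const' 0
  | @add D f g hf hg ihf ihg =>
    have : ∀ q : Fin n → ℝ, deriv (fun t => f (Function.update q k t) + g (Function.update q k t))
        (q k) = deriv (fun t => f (Function.update q k t)) (q k)
          + deriv (fun t => g (Function.update q k t)) (q k) := fun q =>
      deriv_fun_add (hf.differentiable_update q k _) (hg.differentiable_update q k _)
    simp only [this]
    exact ihf.add ihg
  | @mul D D' f g hf hg ihf ihg =>
    have : ∀ q : Fin n → ℝ, deriv (fun t => f (Function.update q k t) * g (Function.update q k t))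
        (q k) = deriv (fun t => f (Function.update q k t)) (q k) * g q
          + f q * deriv (fun t => g (Function.update q k t)) (q k) := fun q => by
      rw [deriv_fun_mul (hf.differentiable_update q k _) (hg.differentiable_update q k _),
        Function.update_eq_self]
    simp only [this]
    exact (ihf.mul hg).add (hf.mul ihg)
  | mono hD _ ih => exact mono hD ih

end TrigPoly

/-! ### Block degrees of the kinematic quantities -/

section Kinematics

variable {n : ℕ} (rev : Fin n → Bool) (θ0 d0 aDH αDH : Fin n → ℝ)

lemma trigPoly_cos_theta (b : Fin n) :
    TrigPoly rev (Pi.single b 1) (fun q => Real.cos (dhTheta rev θ0 q b)) := by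
  unfold dhTheta
  cases hb : rev b with
  | false => simpa using TrigPoly.const' _
  | true =>
    simp only [if_true, Real.cos_add]
    exact ((TrigPoly.cos b hb).const_mul _).sub ((TrigPoly.sin b hb).const_mul _)

lemma trigPoly_sin_theta (b : Fin n) :
    TrigPoly rev (Pi.single b 1) (fun q => Real.sin (dhTheta rev θ0 q b)) := by
  unfold dhTheta
  cases hb : rev b with
  | false => simpa using TrigPoly.const' _
  | true =>
    simp only [if_true, Real.sin_add]
    exact ((TrigPoly.cos b hb).const_mul _).add ((TrigPoly.sin b hb).const_mul _)

lemma trigPoly_D (b : Fin n) : TrigPoly rev (Pi.single b 1) (fun q => dhD rev d0 q b) := by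
  unfold dhD
  cases hb : rev b with
  | false => simpa using (TrigPoly.const' (d0 b)).add (TrigPoly.coord b hb)
  | true => simpa using TrigPoly.const' _

lemma trigPoly_Rz (b : Fin n) (r s : Fin 3) :
    TrigPoly rev (Pi.single b 1) (fun q => RzMat (dhTheta rev θ0 q b) r s) := by
  have hc := trigPoly_cos_theta rev θ0 b
  have hs := trigPoly_sin_theta rev θ0 b
  have hs' := hs.neg
  fin_cases r <;> fin_cases s <;> simp [RzMat] <;>
    first | assumption | exact TrigPoly.const' _

lemma trigPoly_Rrel (b : Fin n) (r s : Fin 3) :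
    TrigPoly rev (Pi.single b 1) (fun q => dhRrel rev θ0 αDH q b r s) :=
  TrigPoly.mono (by simp) (TrigPoly.matrix_mul (trigPoly_Rz rev θ0 b)
    (fun r s => TrigPoly.const (RxMat (αDH b) r s)) r s)

lemma trigPoly_Lrel (b : Fin n) (r : Fin 3) :
    TrigPoly rev (Pi.single b 1) (fun q => dhLrel rev θ0 d0 aDH q b r) := by
  unfold dhLrel
  simp only [Pi.add_apply]
  refine TrigPoly.add ?_ (TrigPoly.mono (by simp) (TrigPoly.matrix_mulVec (trigPoly_Rz rev θ0 b)
    (fun s => TrigPoly.const (![aDH b, 0, 0] s)) r))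
  have hd := trigPoly_D rev d0 b
  fin_cases r <;> simp <;> first | exact hd | exact TrigPoly.const' _

lemma Rz_transpose_mul (θ : ℝ) : (RzMat θ)ᵀ * RzMat θ = 1 := by
  have h := Real.sin_sq_add_cos_sq θ
  ext r s
  fin_cases r <;> fin_cases s <;>
    simp [RzMat, Matrix.mul_apply, Fin.sum_univ_three] <;> linarith

lemma Rx_transpose_mul (α : ℝ) : (RxMat α)ᵀ * RxMat α = 1 := by
  have h := Real.sin_sq_add_cos_sq α
  ext r s
  fin_cases r <;> fin_cases s <;>
    simp [RxMat, Matrix.mul_apply, Fin.sum_univ_three] <;> linarith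

lemma transpose_mul_self_mul {M N : Matrix (Fin 3) (Fin 3) ℝ} (hM : Mᵀ * M = 1)
    (hN : Nᵀ * N = 1) : (M * N)ᵀ * (M * N) = 1 := by
  rw [Matrix.transpose_mul, Matrix.mul_assoc, ← Matrix.mul_assoc Mᵀ, hM, Matrix.one_mul, hN]

lemma R0_transpose_mul (q : Fin n → ℝ) (j : ℕ) :
    (dhR0 rev θ0 αDH q j)ᵀ * dhR0 rev θ0 αDH q j = 1 := by
  induction j with
  | zero => simp [dhR0]
  | succ j ih =>
    refine transpose_mul_self_mul ih ?_
    split_ifs with h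
    · exact transpose_mul_self_mul (Rz_transpose_mul _) (Rx_transpose_mul _)
    · simp

/-- The relative rotation `(R_j^0)ᵀ R_{j+k}^0 = R_{j+1}^j ⋯ R_{j+k}^{j+k-1}` only involves the joints
with (0-based) index in `[j, j + k)`, with block degree one. -/
lemma trigPoly_R0_rel (j k : ℕ) (r s : Fin 3) :
    TrigPoly rev (fun b => if j ≤ b.val ∧ b.val < j + k then 1 else 0)
      (fun q => ((dhR0 rev θ0 αDH q j)ᵀ * dhR0 rev θ0 αDH q (j + k)) r s) := by
  induction k generalizing r s with
  | zero =>
    simp only [add_zero, R0_transpose_mul]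
    exact TrigPoly.const' _
  | succ k ih =>
    simp only [← add_assoc, dhR0, ← Matrix.mul_assoc]
    split_ifs with h
    · refine TrigPoly.mono ?_ (TrigPoly.matrix_mul ih (trigPoly_Rrel rev θ0 αDH ⟨j + k, h⟩) r s)
      intro b
      by_cases hb : b = ⟨j + k, h⟩
      · subst hb
        simp
      · have : b.val ≠ j + k := fun h' => hb (Fin.ext h')
        simp only [Pi.add_apply, Pi.single_eq_of_ne hb]
        split_ifs <;> omega
    · simp only [Matrix.mul_one]
      refine TrigPoly.mono ?_ (ih r s)
      intro b
      dsimp only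
      split_ifs <;> omega

lemma trigPoly_R0 (k : ℕ) (r s : Fin 3) :
    TrigPoly rev (fun b => if b.val < k then 1 else 0) (fun q => dhR0 rev θ0 αDH q k r s) := by
  simpa [dhR0] using trigPoly_R0_rel rev θ0 αDH 0 k r s

variable (cloc : Fin n → Fin 3 → ℝ)

lemma trigPoly_Com (i : Fin n) (r : Fin 3) :
    TrigPoly rev 1 (fun q => dhCom rev θ0 d0 aDH αDH cloc q i r) := by
  unfold dhCom
  simp only [Pi.add_apply, Finset.sum_apply]
  refine TrigPoly.add (TrigPoly.sum _ fun j _ => ?_) ?_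
  · split_ifs with h
    · refine TrigPoly.mono ?_ (TrigPoly.matrix_mulVec (trigPoly_R0 rev θ0 αDH j.val)
        (trigPoly_Lrel rev θ0 d0 aDH j) r)
      intro b
      by_cases hb : b = j
      · subst hb
        simp
      · simp only [Pi.add_apply, Pi.single_eq_of_ne hb, Pi.one_apply]
        split_ifs <;> omega
    · exact TrigPoly.const' _
  · refine TrigPoly.mono ?_ (TrigPoly.matrix_mulVec (trigPoly_R0 rev θ0 αDH (i.val + 1))
        (fun s => TrigPoly.const (cloc i s)) r)
    intro b
    simp only [Pi.add_apply, Pi.zero_apply, Pi.one_apply]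
    split_ifs <;> omega

lemma trigPoly_Jlin (i : Fin n) (r : Fin 3) (k : Fin n) :
    TrigPoly rev 1 (fun q => dhJlin rev θ0 d0 aDH αDH cloc q i r k) :=
  (trigPoly_Com rev θ0 d0 aDH αDH cloc i r).pd k

/-- By orthogonality, the `k`-th row of `J_ω,iᵀ R_i^0` is, up to the factor `λ_k`, the last row of
a relative rotation. -/
lemma Jang_transpose_mul_R0 (q : Fin n → ℝ) (i k : Fin n) (s : Fin 3) :
    ((dhJang rev θ0 αDH q i)ᵀ * dhR0 rev θ0 αDH q (i.val + 1)) k s =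
      if k ≤ i then (if rev k then (1 : ℝ) else 0) *
        ((dhR0 rev θ0 αDH q k.val)ᵀ * dhR0 rev θ0 αDH q (i.val + 1)) 2 s else 0 := by
  by_cases h : k ≤ i
  · simp [dhJang, h, Matrix.mul_apply, Matrix.mulVec, dotProduct, Fin.sum_univ_three]
  · simp [dhJang, h, Matrix.mul_apply]

lemma trigPoly_Jang_R0 (i k : Fin n) (s : Fin 3) :
    TrigPoly rev 1
      (fun q => ((dhJang rev θ0 αDH q i)ᵀ * dhR0 rev θ0 αDH q (i.val + 1)) k s) := by
  simp only [Jang_transpose_mul_R0]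
  by_cases h : k ≤ i
  · simp only [if_pos h]
    obtain ⟨d, hd⟩ : ∃ d, i.val + 1 = k.val + d := ⟨i.val + 1 - k.val, by
      have : k.val ≤ i.val := h
      omega⟩
    rw [hd]
    refine TrigPoly.const_mul _ (TrigPoly.mono ?_ (trigPoly_R0_rel rev θ0 αDH k.val d 2 s))
    intro b
    simp only [Pi.one_apply]
    split_ifs <;> omega
  · simp only [if_neg h]
    exact TrigPoly.const' _

lemma trigPoly_B (m : Fin n → ℝ) (Iner : Fin n → Matrix (Fin 3) (Fin 3) ℝ) (j k : Fin n) :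
    TrigPoly rev 2 (fun q => dhB rev θ0 d0 aDH αDH cloc m Iner q j k) := by
  unfold dhB
  simp only [Matrix.sum_apply, Matrix.add_apply, Matrix.smul_apply, smul_eq_mul]
  refine TrigPoly.sum _ fun i _ => TrigPoly.add (TrigPoly.const_mul _ ?_) ?_
  · refine TrigPoly.mono (D := 1 + 1) (by norm_num) (TrigPoly.matrix_mul
      (fun r s => ?_) (trigPoly_Jlin rev θ0 d0 aDH αDH cloc i) j k)
    exact trigPoly_Jlin rev θ0 d0 aDH αDH cloc i s r
  · have hA := trigPoly_Jang_R0 rev θ0 αDH i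
    have hAI : ∀ r s, TrigPoly rev (1 + 0) (fun q => ((dhJang rev θ0 αDH q i)ᵀ *
        dhR0 rev θ0 αDH q (i.val + 1) * Iner i) r s) :=
      TrigPoly.matrix_mul hA fun r s => TrigPoly.const (Iner i r s)
    have hAT : ∀ r s, TrigPoly rev 1 (fun q => ((dhJang rev θ0 αDH q i)ᵀ *
        dhR0 rev θ0 αDH q (i.val + 1))ᵀ r s) := fun r s => hA s r
    have h := TrigPoly.matrix_mul hAI hAT j k
    simp only [Matrix.transpose_mul, Matrix.transpose_transpose, ← Matrix.mul_assoc] at h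
    exact TrigPoly.mono (by norm_num) h

end Kinematics

/-! ### Formal polynomials in the augmented variables -/

section Formal

variable {n : ℕ} {rev : Fin n → Bool}

/-- Admissible exponents: block degree at most `D b` at each joint `b`, where only the variables
relevant for the type of the joint occur, and combined degree at most `E` in all the
variables `v_{jk}` and `a_k`. -/
def Admissible (rev : Fin n → Bool) (D : Fin n → ℕ) (E : ℕ) (μ : DynVar n →₀ ℕ) : Prop :=
  (∀ b, μ (Sum.inl (cVar b)) + μ (Sum.inl (sVar b)) + μ (Sum.inl (xVar b)) ≤ D b ∧
    (rev b = false → μ (Sum.inl (cVar b)) = 0 ∧ μ (Sum.inl (sVar b)) = 0) ∧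
    (rev b = true → μ (Sum.inl (xVar b)) = 0)) ∧
  ∑ w : VelIdx n ⊕ Fin n, μ (Sum.inr w) ≤ E

/-- `Representable rev D E F`: the function `F` of `(q, q̇, q̈)` is the evaluation of a polynomial in
the augmented variables all of whose exponents are admissible for `D` and `E`. -/
def Representable (rev : Fin n → Bool) (D : Fin n → ℕ) (E : ℕ)
    (F : (Fin n → ℝ) → (Fin n → ℝ) → (Fin n → ℝ) → ℝ) : Prop :=
  ∃ P : MvPolynomial (DynVar n) ℝ, (∀ μ ∈ P.support, Admissible rev D E μ) ∧
    ∀ q qd qdd, MvPolynomial.eval (dynEval q qd qdd) P = F q qd qdd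

lemma Admissible.mono {D D' : Fin n → ℕ} {E E' : ℕ} {μ : DynVar n →₀ ℕ}
    (h : Admissible rev D E μ) (hD : D ≤ D') (hE : E ≤ E') : Admissible rev D' E' μ :=
  ⟨fun b => ⟨(h.1 b).1.trans (hD b), (h.1 b).2⟩, h.2.trans hE⟩

lemma Admissible.add {D D' : Fin n → ℕ} {E E' : ℕ} {μ ν : DynVar n →₀ ℕ}
    (hμ : Admissible rev D E μ) (hν : Admissible rev D' E' ν) :
    Admissible rev (D + D') (E + E') (μ + ν) := by
  refine ⟨fun b => ?_, ?_⟩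
  · obtain ⟨h1, h2, h3⟩ := hμ.1 b
    obtain ⟨k1, k2, k3⟩ := hν.1 b
    simp only [Finsupp.add_apply, Pi.add_apply]
    refine ⟨by omega, fun hb => ?_, fun hb => ?_⟩
    · have := h2 hb
      have := k2 hb
      omega
    · have := h3 hb
      have := k3 hb
      omega
  · simp only [Finsupp.add_apply, Finset.sum_add_distrib]
    exact Nat.add_le_add hμ.2 hν.2

namespace Representable

variable {D D' : Fin n → ℕ} {E E' : ℕ} {F G : (Fin n → ℝ) → (Fin n → ℝ) → (Fin n → ℝ) → ℝ}

lemma mono (hD : D ≤ D') (hE : E ≤ E') (h : Representable rev D E F) :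
    Representable rev D' E' F := by
  obtain ⟨P, hP, hF⟩ := h
  exact ⟨P, fun μ hμ => (hP μ hμ).mono hD hE, hF⟩

lemma const (c : ℝ) : Representable rev 0 0 (fun _ _ _ => c) := by
  classical
  refine ⟨MvPolynomial.C c, fun μ hμ => ?_, by simp⟩
  rw [MvPolynomial.support_C] at hμ
  split_ifs at hμ with hc
  · simp at hμ
  · rw [Finset.mem_singleton] at hμ
    subst hμ
    simp [Admissible]

lemma add (hF : Representable rev D E F) (hG : Representable rev D E G) :
    Representable rev D E (fun q qd qdd => F q qd qdd + G q qd qdd) := by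
  classical
  obtain ⟨P, hP, hPF⟩ := hF
  obtain ⟨Q, hQ, hQG⟩ := hG
  refine ⟨P + Q, fun μ hμ => ?_, fun q qd qdd => by simp [hPF, hQG]⟩
  rcases Finset.mem_union.mp (MvPolynomial.support_add hμ) with h | h
  · exact hP μ h
  · exact hQ μ h

lemma mul (hF : Representable rev D E F) (hG : Representable rev D' E' G) :
    Representable rev (D + D') (E + E') (fun q qd qdd => F q qd qdd * G q qd qdd) := by
  classical
  obtain ⟨P, hP, hPF⟩ := hF
  obtain ⟨Q, hQ, hQG⟩ := hG
  refine ⟨P * Q, fun μ hμ => ?_, fun q qd qdd => by simp [hPF, hQG]⟩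
  obtain ⟨α, hα, β, hβ, rfl⟩ := Finset.mem_add.mp (MvPolynomial.support_mul P Q hμ)
  exact (hP α hα).add (hQ β hβ)

lemma sum {ι : Type*} (s : Finset ι)
    {H : ι → (Fin n → ℝ) → (Fin n → ℝ) → (Fin n → ℝ) → ℝ}
    (h : ∀ x ∈ s, Representable rev D E (H x)) :
    Representable rev D E (fun q qd qdd => ∑ x ∈ s, H x q qd qdd) := by
  classical
  induction s using Finset.induction_on with
  | empty => simpa using mono (fun b => Nat.zero_le (D b)) (Nat.zero_le E) (const (rev := rev) 0)
  | insert a s ha ih =>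
    simp only [Finset.sum_insert ha]
    exact (h a (by simp)).add (ih fun x hx => h x (by simp [hx]))

lemma var (w : DynVar n) (hw : Admissible rev D E (Finsupp.single w 1)) :
    Representable rev D E (fun q qd qdd => dynEval q qd qdd w) := by
  refine ⟨MvPolynomial.X w, fun μ hμ => ?_, by simp⟩
  rw [MvPolynomial.support_X, Finset.mem_singleton] at hμ
  exact hμ ▸ hw

lemma dynVar (w : VelIdx n ⊕ Fin n) :
    Representable rev 0 1 (fun q qd qdd => dynEval q qd qdd (Sum.inr w)) := by
  classical
  refine var _ ⟨fun b => by simp, ?_⟩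
  simp [Finsupp.single_apply]

/-- The velocity product `q̇_k q̇_j` is the variable indexed by the sorted pair. -/
lemma velocity (j k : Fin n) : Representable rev 0 1 (fun _ qd _ => qd k * qd j) := by
  rcases le_total j k with h | h
  · simpa [dynEval, mul_comm] using dynVar (rev := rev) (Sum.inl ⟨(j, k), h⟩)
  · simpa [dynEval] using dynVar (rev := rev) (Sum.inl ⟨(k, j), h⟩)

lemma acceleration (k : Fin n) : Representable rev 0 1 (fun _ _ qdd => qdd k) := by
  simpa [dynEval] using dynVar (rev := rev) (Sum.inr k)

end Representable

/-- A trigonometric polynomial comes from a formal polynomial in the position variables alone. -/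
lemma TrigPoly.representable {D : Fin n → ℕ} {f : (Fin n → ℝ) → ℝ} (hf : TrigPoly rev D f) :
    Representable rev D 0 (fun q _ _ => f q) := by
  classical
  induction hf with
  | const c => exact Representable.const c
  | cos b hb =>
    refine Representable.var (Sum.inl (cVar b)) ⟨fun b' => ?_, by simp⟩
    by_cases h : b = b'
    · subst h
      simp [cVar, sVar, xVar, hb]
    · simp [cVar, sVar, xVar, h]
  | sin b hb =>
    refine Representable.var (Sum.inl (sVar b)) ⟨fun b' => ?_, by simp⟩
    by_cases h : b = b'
    · subst h
      simp [cVar, sVar, xVar, hb]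
    · simp [cVar, sVar, xVar, h]
  | coord b hb =>
    refine Representable.var (Sum.inl (xVar b)) ⟨fun b' => ?_, by simp⟩
    by_cases h : b = b'
    · subst h
      simp [cVar, sVar, xVar, hb]
    · simp [cVar, sVar, xVar, h]
  | add _ _ ihf ihg => exact ihf.add ihg
  | mul _ _ ihf ihg => exact ihf.mul ihg
  | mono hD _ ih => exact ih.mono hD le_rfl

/-- Total degree of an admissible exponent, obtained by summing over the blocks. -/
lemma Admissible.degree_le {D : Fin n → ℕ} {E : ℕ} {μ : DynVar n →₀ ℕ}
    (h : Admissible rev D E μ) : (μ.sum fun _ e => e) ≤ ∑ b, D b + E := by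
  rw [Finsupp.sum_fintype _ _ (fun _ => rfl), Fintype.sum_sum_type]
  refine Nat.add_le_add ?_ h.2
  rw [Fintype.sum_sum_type, Fintype.sum_sum_type, ← Finset.sum_add_distrib,
    ← Finset.sum_add_distrib]
  refine Finset.sum_le_sum fun b _ => ?_
  have := (h.1 b).1
  simp only [cVar, sVar, xVar] at this
  omega

end Formal

/-- For a serial manipulator with `n` joints (each revolute or prismatic)
with rigid-body inverse dynamics `τ = B(q) q̈ + C(q,q̇) q̇ + g(q)`, every joint torque `τ_i`
is a polynomial of total degree at most `2n+1` in the augmented variables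
`c_r = cos q_r, s_r = sin q_r` (`r ∈ I_r`), `x_p = q_p` (`p ∈ I_p`),
`v_{jk} = q̇_j q̇_k` (`j ≤ k`) and `a_k = q̈_k`, in which every monomial has
`deg c_r ≤ 2`, `deg s_r ≤ 2`, `deg x_p ≤ 2`, `deg v_{jk} ≤ 1`, `deg a_k ≤ 1`, and
`deg c_b + deg s_b ≤ 2` for every revolute `b`. -/
theorem inverse_dynamics_polynomial
    {n : ℕ} (rev : Fin n → Bool) (θ0 d0 aDH αDH : Fin n → ℝ)
    (cloc : Fin n → Fin 3 → ℝ) (m : Fin n → ℝ) (Iner : Fin n → Matrix (Fin 3) (Fin 3) ℝ)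
    (hIner : ∀ i, (Iner i).IsSymm) (g0 : Fin 3 → ℝ) (i : Fin n) :
    ∃ P : MvPolynomial (DynVar n) ℝ,
      P.totalDegree ≤ 2 * n + 1 ∧
      (∀ μ ∈ P.support,
        (∀ b : Fin n,
          μ (Sum.inl (cVar b)) ≤ 2 ∧
          μ (Sum.inl (sVar b)) ≤ 2 ∧
          μ (Sum.inl (cVar b)) + μ (Sum.inl (sVar b)) ≤ 2 ∧
          μ (Sum.inl (xVar b)) ≤ 2 ∧
          (rev b = false → μ (Sum.inl (cVar b)) = 0 ∧ μ (Sum.inl (sVar b)) = 0) ∧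
          (rev b = true → μ (Sum.inl (xVar b)) = 0)) ∧
        (∀ jk : VelIdx n, μ (vVar jk) ≤ 1) ∧
        (∀ k : Fin n, μ (aVar k) ≤ 1)) ∧
      ∀ q qd qdd : Fin n → ℝ,
        MvPolynomial.eval (dynEval q qd qdd) P
          = dhTau rev θ0 d0 aDH αDH cloc m Iner g0 q qd qdd i := by
  have hB := trigPoly_B rev θ0 d0 aDH αDH cloc m Iner
  have hU : TrigPoly rev 2 (dhU rev θ0 d0 aDH αDH cloc m g0) :=
    TrigPoly.sum _ fun j _ => TrigPoly.const_mul _ <| TrigPoly.sum _ fun r _ =>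
      TrigPoly.const_mul _ <| TrigPoly.mono (by norm_num)
        (trigPoly_Com rev θ0 d0 aDH αDH cloc j r)
  have hτ : Representable rev 2 1 (fun q qd qdd =>
      dhTau rev θ0 d0 aDH αDH cloc m Iner g0 q qd qdd i) := by
    unfold dhTau
    refine Representable.add (Representable.add (Representable.sum _ fun k _ => ?_) ?_) ?_
    · exact (hB i k).representable.mul (Representable.acceleration k)
    · unfold dhCor
      refine Representable.sum _ fun j _ => Representable.sum _ fun k _ => ?_
      simp only [mul_assoc]
      exact (((hB i j).pd k).sub (((hB j k).pd i).const_mul (1 / 2))).representable.mul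
        (Representable.velocity j k)
    · exact (hU.pd i).representable.mono le_rfl zero_le_one
  obtain ⟨P, hP, hPτ⟩ := hτ
  refine ⟨P, ?_, fun μ hμ => ⟨fun b => ?_, fun jk => ?_, fun k => ?_⟩, hPτ⟩
  · refine Finset.sup_le fun μ hμ => (hP μ hμ).degree_le.trans ?_
    simp [mul_comm]
  · obtain ⟨h1, h2, h3⟩ := (hP μ hμ).1 b
    have h1 : _ ≤ 2 := h1
    exact ⟨by omega, by omega, by omega, by omega, h2, h3⟩
  · exact (Finset.single_le_sum (f := fun w => μ (Sum.inr w)) (fun _ _ => Nat.zero_le _)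
      (Finset.mem_univ (Sum.inl jk))).trans (hP μ hμ).2
  · exact (Finset.single_le_sum (f := fun w => μ (Sum.inr w)) (fun _ _ => Nat.zero_le _)
      (Finset.mem_univ (Sum.inr k))).trans (hP μ hμ).2
end
end

section
/- For every i ∈ {1,…,n}, each of the three components of the center-of-mass position c_i(q) = Σ_{j=1}^{i} R_{j-1}^0(q) l_j^{j-1}(q) + R_i^0(q) c_i^i is a polynomial function of the augmented position variables: there exists a real multivariate polynomial in formal variables c_r, s_r (r ∈ I_r) and x_p (p ∈ I_p), of total degree at most i, whose every monomial satisfies deg(c_b) + deg(s_b) ≤ 1 for each b ∈ I_r and deg(x_p) ≤ 1 for each p ∈ I_p, and whose evaluation at c_r = cos(q_r), s_r = sin(q_r), x_p = q_p equals that component for all q ∈ ℝ^n. -/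
/-!
Joint `b` enters the relative rotation `R_b^{b-1}` and translation `l_b^{b-1}` only through
linear combinations of `1, cos q_b, sin q_b` (revolute, by the angle addition formulas) or of
`1, q_b` (prismatic); these functions form the space `jointFun rev b`. Let `posFun rev k` be the
space of functions given by admissible polynomials of degree at most `k` in the variables of the
first `k` joints. Multiplying by an element of `jointFun rev b` maps `posFun rev b` into
`posFun rev (b + 1)` (0-based `b`), because the variables of joint `b` have not occurred before
(`posMon_add_jointMon`, `mul_mem_posFun`). By induction the entries of `R_k^0` lie in
`posFun rev k` (`dhR0_mem_posFun`), so every summand of the center of mass of the link with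
0-based index `i` lies in `posFun rev (i + 1)` (`dhCom_mem_posFun`).
-/


noncomputable section

open Matrix Real

/-- Exponent vectors allowed after the first `k` joints: total degree at most `k`, the degree
bounds of the theorem at every joint, and no variable of a joint with (0-based) index `≥ k`. -/
def posMon {n : ℕ} (rev : Fin n → Bool) (k : ℕ) : Set (PosVar n →₀ ℕ) :=
  {μ | μ.degree ≤ k ∧ ∀ b : Fin n,
    (μ (cVar b) + μ (sVar b) ≤ 1 ∧
      μ (xVar b) ≤ 1 ∧
      (rev b = false → μ (cVar b) = 0 ∧ μ (sVar b) = 0) ∧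
      (rev b = true → μ (xVar b) = 0)) ∧
    (k ≤ b.val → μ (cVar b) = 0 ∧ μ (sVar b) = 0 ∧ μ (xVar b) = 0)}

/-- Exponent vectors of the monomials available at the single joint `b`: `1, c_b, s_b` if it is
revolute and `1, x_b` if it is prismatic. -/
def jointMon {n : ℕ} (rev : Fin n → Bool) (b : Fin n) : Set (PosVar n →₀ ℕ) :=
  {ν | ν = 0 ∨
    (rev b = true ∧ (ν = Finsupp.single (cVar b) 1 ∨ ν = Finsupp.single (sVar b) 1)) ∨
    (rev b = false ∧ ν = Finsupp.single (xVar b) 1)}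

/-- The algebra map sending a polynomial in the position variables to the function of the
configuration `q` that it defines. -/
def evalHom (n : ℕ) : MvPolynomial (PosVar n) ℝ →ₐ[ℝ] ((Fin n → ℝ) → ℝ) :=
  MvPolynomial.aeval fun v q => posEval q v

/-- Functions of `q` given by polynomials with exponents in `posMon rev k`. -/
def posFun {n : ℕ} (rev : Fin n → Bool) (k : ℕ) : Submodule ℝ ((Fin n → ℝ) → ℝ) :=
  (MvPolynomial.restrictSupport ℝ (posMon rev k)).map (evalHom n).toLinearMap

/-- Functions of `q` given by polynomials with exponents in `jointMon rev b`. -/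
def jointFun {n : ℕ} (rev : Fin n → Bool) (b : Fin n) : Submodule ℝ ((Fin n → ℝ) → ℝ) :=
  (MvPolynomial.restrictSupport ℝ (jointMon rev b)).map (evalHom n).toLinearMap

theorem evalHom_apply {n : ℕ} (P : MvPolynomial (PosVar n) ℝ) (q : Fin n → ℝ) :
    evalHom n P q = MvPolynomial.eval (posEval q) P := by
  induction P using MvPolynomial.induction_on with
  | C a => simp [evalHom]
  | add P Q hP hQ => simp [hP, hQ]
  | mul_X P v hP =>
    rw [map_mul, Pi.mul_apply, hP]
    simp [evalHom]

open scoped Pointwise in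
/-- A joint not used so far contributes at most one new variable of its own, so the degree bounds
survive and the total degree grows by at most one. -/
theorem posMon_add_jointMon {n : ℕ} (rev : Fin n → Bool) (b : Fin n) :
    posMon rev b.val + jointMon rev b ⊆ posMon rev (b.val + 1) := by
  rintro _ ⟨μ, ⟨hd, hμ⟩, ν, hν, rfl⟩
  refine ⟨?_, fun e => ?_⟩
  · have : ν.degree ≤ 1 := by
      rcases hν with rfl | ⟨-, rfl | rfl⟩ | ⟨-, rfl⟩ <;> simp
    simp only [map_add]
    omega
  · obtain ⟨⟨h1, h2, h3, h4⟩, h5⟩ := hμ e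
    by_cases he : e = b
    · subst he
      have h6 := h5 le_rfl
      rcases hν with rfl | ⟨hr, rfl | rfl⟩ | ⟨hr, rfl⟩ <;>
        simp_all [cVar, sVar, xVar]
    · have he' : b ≠ e := fun h => he h.symm
      have hne : e.val ≠ b.val := fun h => he (Fin.ext h)
      have hz : ν (cVar e) = 0 ∧ ν (sVar e) = 0 ∧ ν (xVar e) = 0 := by
        rcases hν with rfl | ⟨-, rfl | rfl⟩ | ⟨-, rfl⟩ <;>
          simp [cVar, sVar, xVar, he']
      simp only [Finsupp.add_apply, hz.1, hz.2.1, hz.2.2, add_zero]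
      exact ⟨⟨h1, h2, h3, h4⟩, fun h => h5 (by omega)⟩

theorem posFun_mono {n : ℕ} (rev : Fin n → Bool) {k l : ℕ} (h : k ≤ l) :
    posFun rev k ≤ posFun rev l := by
  refine Submodule.map_mono (MvPolynomial.restrictSupport_mono _ ?_)
  rintro μ ⟨hd, hμ⟩
  exact ⟨hd.trans h, fun b => ⟨(hμ b).1, fun hb => (hμ b).2 (h.trans hb)⟩⟩

open scoped Pointwise in
theorem mul_mem_posFun {n : ℕ} {rev : Fin n → Bool} {b : Fin n} {f g : (Fin n → ℝ) → ℝ}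
    (hf : f ∈ posFun rev b.val) (hg : g ∈ jointFun rev b) :
    (fun q => f q * g q) ∈ posFun rev (b.val + 1) := by
  have h := Submodule.mul_mem_mul hf hg
  rw [posFun, jointFun, ← Submodule.map_mul, ← MvPolynomial.restrictSupport_add] at h
  exact Submodule.map_mono
    (MvPolynomial.restrictSupport_mono _ (posMon_add_jointMon rev b)) h

theorem const_mem_posFun {n : ℕ} (rev : Fin n → Bool) (k : ℕ) (a : ℝ) :
    (fun _ => a) ∈ posFun rev k := by
  refine ⟨MvPolynomial.monomial 0 a, ?_, ?_⟩
  · exact MvPolynomial.monomial_mem_restrictSupport _ |>.2 (Or.inl (by simp [posMon]))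
  · ext q
    simp [evalHom_apply]

theorem const_mem_jointFun {n : ℕ} (rev : Fin n → Bool) (b : Fin n) (a : ℝ) :
    (fun _ => a) ∈ jointFun rev b := by
  refine ⟨MvPolynomial.monomial 0 a, ?_, ?_⟩
  · exact MvPolynomial.monomial_mem_restrictSupport _ |>.2 (Or.inl (Or.inl rfl))
  · ext q
    simp [evalHom_apply]

theorem var_mem_jointFun {n : ℕ} {rev : Fin n → Bool} {b : Fin n} {v : PosVar n}
    (hv : Finsupp.single v 1 ∈ jointMon rev b) :
    (fun q => posEval q v) ∈ jointFun rev b := by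
  refine ⟨MvPolynomial.X v, ?_, ?_⟩
  · exact MvPolynomial.monomial_mem_restrictSupport _ |>.2 (Or.inl hv)
  · ext q
    simp [evalHom_apply]

/-- By the angle addition formula, `cos θ_b` is a combination of `cos q_b` and `sin q_b`
(or constant). -/
theorem cos_mem_jointFun {n : ℕ} (rev : Fin n → Bool) (θ0 : Fin n → ℝ) (b : Fin n) :
    (fun q => Real.cos (dhTheta rev θ0 q b)) ∈ jointFun rev b := by
  cases hr : rev b
  · simpa [dhTheta, hr] using const_mem_jointFun rev b (Real.cos (θ0 b))
  · have hc : (fun q => Real.cos (q b)) ∈ jointFun rev b :=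
      var_mem_jointFun (v := cVar b) (Or.inr (Or.inl ⟨hr, Or.inl rfl⟩))
    have hs : (fun q => Real.sin (q b)) ∈ jointFun rev b :=
      var_mem_jointFun (v := sVar b) (Or.inr (Or.inl ⟨hr, Or.inr rfl⟩))
    convert sub_mem (Submodule.smul_mem _ (Real.cos (θ0 b)) hc)
      (Submodule.smul_mem _ (Real.sin (θ0 b)) hs) using 1
    ext q
    simp [dhTheta, hr, Real.cos_add]

theorem sin_mem_jointFun {n : ℕ} (rev : Fin n → Bool) (θ0 : Fin n → ℝ) (b : Fin n) :
    (fun q => Real.sin (dhTheta rev θ0 q b)) ∈ jointFun rev b := by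
  cases hr : rev b
  · simpa [dhTheta, hr] using const_mem_jointFun rev b (Real.sin (θ0 b))
  · have hc : (fun q => Real.cos (q b)) ∈ jointFun rev b :=
      var_mem_jointFun (v := cVar b) (Or.inr (Or.inl ⟨hr, Or.inl rfl⟩))
    have hs : (fun q => Real.sin (q b)) ∈ jointFun rev b :=
      var_mem_jointFun (v := sVar b) (Or.inr (Or.inl ⟨hr, Or.inr rfl⟩))
    convert add_mem (Submodule.smul_mem _ (Real.sin (θ0 b)) hc)
      (Submodule.smul_mem _ (Real.cos (θ0 b)) hs) using 1
    ext q
    simp [dhTheta, hr, Real.sin_add]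

theorem dhD_mem_jointFun {n : ℕ} (rev : Fin n → Bool) (d0 : Fin n → ℝ) (b : Fin n) :
    (fun q => dhD rev d0 q b) ∈ jointFun rev b := by
  cases hr : rev b
  · have hx : (fun q => q b) ∈ jointFun rev b :=
      var_mem_jointFun (v := xVar b) (Or.inr (Or.inr ⟨hr, rfl⟩))
    convert add_mem (const_mem_jointFun rev b (d0 b)) hx using 1
    ext q
    simp [dhD, hr]
  · simpa [dhD, hr] using const_mem_jointFun rev b (d0 b)

theorem RzMat_mem_jointFun {n : ℕ} (rev : Fin n → Bool) (θ0 : Fin n → ℝ) (b : Fin n)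
    (s t : Fin 3) : (fun q => RzMat (dhTheta rev θ0 q b) s t) ∈ jointFun rev b := by
  have hc := cos_mem_jointFun rev θ0 b
  have hs := sin_mem_jointFun rev θ0 b
  have h0 := const_mem_jointFun rev b 0
  have h1 := const_mem_jointFun rev b 1
  fin_cases s <;> fin_cases t <;>
    first | exact hc | exact hs | exact neg_mem hs | exact h0 | exact h1

/-- Linear combinations with constant coefficients, in the pointwise form in which
matrix products produce them. -/
theorem sum_mul_const_mem {X : Type*} {V : Submodule ℝ (X → ℝ)} {f : Fin 3 → X → ℝ}
    (hf : ∀ j, f j ∈ V) (a : Fin 3 → ℝ) : (fun q => ∑ j, f j q * a j) ∈ V := by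
  convert V.sum_mem (t := Finset.univ) fun j _ => V.smul_mem (a j) (hf j) using 1
  ext q
  simp [mul_comm]

theorem dhRrel_mem_jointFun {n : ℕ} (rev : Fin n → Bool) (θ0 αDH : Fin n → ℝ) (b : Fin n)
    (s t : Fin 3) : (fun q => dhRrel rev θ0 αDH q b s t) ∈ jointFun rev b := by
  simp only [dhRrel, Matrix.mul_apply]
  exact sum_mul_const_mem (fun j => RzMat_mem_jointFun rev θ0 b s j) fun j => RxMat (αDH b) j t

theorem dhLrel_mem_jointFun {n : ℕ} (rev : Fin n → Bool) (θ0 d0 aDH : Fin n → ℝ) (b : Fin n)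
    (s : Fin 3) : (fun q => dhLrel rev θ0 d0 aDH q b s) ∈ jointFun rev b := by
  refine add_mem (?_ : (fun q => (![0, 0, dhD rev d0 q b] : Fin 3 → ℝ) s) ∈ _)
    (sum_mul_const_mem (fun j => RzMat_mem_jointFun rev θ0 b s j) ![aDH b, 0, 0])
  have h0 := const_mem_jointFun rev b 0
  fin_cases s
  exacts [h0, h0, dhD_mem_jointFun rev d0 b]

theorem sum_mul_mem_posFun {n : ℕ} {rev : Fin n → Bool} {b : Fin n}
    {f g : Fin 3 → (Fin n → ℝ) → ℝ}
    (hf : ∀ j, f j ∈ posFun rev b.val) (hg : ∀ j, g j ∈ jointFun rev b) :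
    (fun q => ∑ j, f j q * g j q) ∈ posFun rev (b.val + 1) := by
  convert (posFun rev (b.val + 1)).sum_mem (t := Finset.univ)
    fun j _ => mul_mem_posFun (hf j) (hg j) using 1
  ext q
  simp

theorem dhR0_mem_posFun {n : ℕ} (rev : Fin n → Bool) (θ0 αDH : Fin n → ℝ) (k : ℕ)
    (s t : Fin 3) : (fun q => dhR0 rev θ0 αDH q k s t) ∈ posFun rev k := by
  induction k generalizing s t with
  | zero => exact const_mem_posFun rev 0 _
  | succ k ih =>
    by_cases h : k < n
    · simp only [dhR0, h, dif_pos, Matrix.mul_apply]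
      exact sum_mul_mem_posFun (b := ⟨k, h⟩) (fun j => ih s j)
        fun j => dhRrel_mem_jointFun rev θ0 αDH ⟨k, h⟩ j t
    · simpa only [dhR0, h, dif_neg, not_false_eq_true, mul_one]
        using posFun_mono rev k.le_succ (ih s t)

theorem dhCom_mem_posFun {n : ℕ} (rev : Fin n → Bool) (θ0 d0 aDH αDH : Fin n → ℝ)
    (cloc : Fin n → Fin 3 → ℝ) (i : Fin n) (r : Fin 3) :
    (fun q => dhCom rev θ0 d0 aDH αDH cloc q i r) ∈ posFun rev (i.val + 1) := by
  have hlink (j : Fin n) : (fun q => (if j ≤ i then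
      (dhR0 rev θ0 αDH q j.val).mulVec (dhLrel rev θ0 d0 aDH q j) else 0) r)
      ∈ posFun rev (i.val + 1) := by
    by_cases h : j ≤ i
    · simp only [h, if_true]
      exact posFun_mono rev (Nat.succ_le_succ h)
        (sum_mul_mem_posFun (fun t => dhR0_mem_posFun rev θ0 αDH j.val r t)
          fun t => dhLrel_mem_jointFun rev θ0 d0 aDH j t)
    · simpa only [h, if_false, Pi.zero_apply] using const_mem_posFun rev _ 0
  have hlocal : (fun q => (dhR0 rev θ0 αDH q (i.val + 1)).mulVec (cloc i) r)
      ∈ posFun rev (i.val + 1) :=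
    sum_mul_const_mem (fun t => dhR0_mem_posFun rev θ0 αDH (i.val + 1) r t) (cloc i)
  convert add_mem (Submodule.sum_mem _ (t := Finset.univ) fun j _ => hlink j) hlocal using 1
  ext q
  simp only [dhCom, Pi.add_apply, Finset.sum_apply]

/-- Every component of the center-of-mass position `c_i(q)` is a
polynomial of total degree at most `i` in the formal variables `c_r, s_r` (`r ∈ I_r`)
and `x_p` (`p ∈ I_p`), in which every monomial satisfies `deg c_b + deg s_b ≤ 1` for
every `b ∈ I_r` and `deg x_p ≤ 1` for every `p ∈ I_p`, and whose evaluation at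
`c_r = cos q_r, s_r = sin q_r, x_p = q_p` equals that component for all `q`. -/
theorem com_components_polynomial
    {n : ℕ} (rev : Fin n → Bool) (θ0 d0 aDH αDH : Fin n → ℝ)
    (cloc : Fin n → Fin 3 → ℝ) (i : Fin n) (r : Fin 3) :
    ∃ P : MvPolynomial (PosVar n) ℝ,
      P.totalDegree ≤ i.val + 1 ∧
      (∀ μ ∈ P.support, ∀ b : Fin n,
        μ (cVar b) + μ (sVar b) ≤ 1 ∧
        μ (xVar b) ≤ 1 ∧
        (rev b = false → μ (cVar b) = 0 ∧ μ (sVar b) = 0) ∧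
        (rev b = true → μ (xVar b) = 0)) ∧
      ∀ q : Fin n → ℝ,
        MvPolynomial.eval (posEval q) P = dhCom rev θ0 d0 aDH αDH cloc q i r := by
  obtain ⟨P, hP, hPeval⟩ := dhCom_mem_posFun rev θ0 d0 aDH αDH cloc i r
  refine ⟨P, ?_, fun μ hμ b => ((hP hμ).2 b).1, fun q => ?_⟩
  · exact Finset.sup_le fun μ hμ => (hP hμ).1
  · rw [← evalHom_apply]
    exact congrFun hPeval q
end
end

section
/- Partial differentiation preserves the constrained trigonometric-polynomial class: let P be a real multivariate polynomial in formal variables c_b, s_b (b ∈ I_r) and x_p (p ∈ I_p), of total degree at most d, whose every monomial satisfies deg(c_b) + deg(s_b) ≤ D_b for each b ∈ I_r and deg(x_p) ≤ E_p for each p ∈ I_p, and define f : ℝ^n → ℝ by f(q) = P evaluated at c_b = cos(q_b), s_b = sin(q_b), x_p = q_p. Then for every k ∈ {1,…,n} there exists a polynomial P_k in the same formal variables, of total degree at most d, whose every monomial satisfies the same bounds deg(c_b) + deg(s_b) ≤ D_b and deg(x_p) ≤ E_p, such that the partial derivative ∂f/∂q_k (q) equals P_k evaluated at c_b = cos(q_b),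 s_b = sin(q_b), x_p = q_p for all q ∈ ℝ^n. -/
noncomputable section

open Matrix Real

/-!
Along the `k`-th coordinate the formal variables evolve by `c_k' = -s_k`, `s_k' = c_k`, `x_k' = 1`,
all others being constant. Hence, by the chain rule (`hasDerivAt_eval_posEval`), `∂/∂q_k` acts on
evaluated polynomials as the derivation `-s_k ∂/∂c_k + c_k ∂/∂s_k + ∂/∂x_k` (`trigDeriv`).
On monomials this derivation either exchanges one factor `c_k` with one factor `s_k`, or removes one
factor `x_k` (`mem_support_trigDeriv`). Neither operation increases the total degree,
`deg c_b + deg s_b` or `deg x_b`, and neither introduces a variable of the wrong joint type, since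
`c_k` or `s_k` (respectively `x_k`) must already have occurred.
-/

open MvPolynomial in
/-- The formal counterpart `-s_k ∂/∂c_k + c_k ∂/∂s_k + ∂/∂x_k` of `∂/∂q_k`. -/
def trigDeriv {n : ℕ} (k : Fin n) (P : MvPolynomial (PosVar n) ℝ) : MvPolynomial (PosVar n) ℝ :=
  -(X (sVar k) * pderiv (cVar k) P) + X (cVar k) * pderiv (sVar k) P + pderiv (xVar k) P

open MvPolynomial in
theorem hasDerivAt_eval_posEval {n : ℕ} (k : Fin n) (q : Fin n → ℝ)
    (P : MvPolynomial (PosVar n) ℝ) :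
    HasDerivAt (fun t => eval (posEval (Function.update q k t)) P)
      (eval (posEval q) (trigDeriv k P)) (q k) := by
  induction P using MvPolynomial.induction_on with
  | C a => simpa [trigDeriv] using hasDerivAt_const (q k) a
  | add p r hp hr =>
    have h := hp.add hr
    simp only [trigDeriv, map_add, map_neg, map_mul] at h ⊢
    refine h.congr_deriv ?_
    ring
  | mul_X p v hp =>
    have hv : HasDerivAt (fun t => posEval (Function.update q k t) v)
        (eval (posEval q) (trigDeriv k (X v))) (q k) := by
      rcases v with b | b | b
      · by_cases hb : b = k
        · subst hb
          simpa only [trigDeriv, posEval, cVar, sVar, xVar, pderiv_X_self, pderiv_X_of_ne, ne_eq,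
            reduceCtorEq, not_false_eq_true, mul_zero, mul_one, neg_zero, add_zero, zero_add,
            map_neg, map_one, eval_X, Sum.elim_inl, Sum.elim_inr, Function.update_self,
            Sum.inr.injEq]
            using Real.hasDerivAt_cos (q b)
        · simpa only [trigDeriv, posEval, cVar, sVar, xVar, pderiv_X_of_ne, hb, ne_eq,
            reduceCtorEq, not_false_eq_true, mul_zero, neg_zero, add_zero, map_zero,
            Sum.elim_inl, Sum.elim_inr, Function.update_of_ne, Sum.inl.injEq, Sum.inr.injEq]
            using hasDerivAt_const (q k) (Real.cos (q b))
      · by_cases hb : b = k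
        · subst hb
          simpa only [trigDeriv, posEval, cVar, sVar, xVar, pderiv_X_self, pderiv_X_of_ne, ne_eq,
            reduceCtorEq, not_false_eq_true, mul_zero, mul_one, neg_zero, add_zero, zero_add,
            map_neg, map_one, eval_X, Sum.elim_inl, Sum.elim_inr, Function.update_self,
            Sum.inr.injEq]
            using Real.hasDerivAt_sin (q b)
        · simpa only [trigDeriv, posEval, cVar, sVar, xVar, pderiv_X_of_ne, hb, ne_eq,
            reduceCtorEq, not_false_eq_true, mul_zero, neg_zero, add_zero, map_zero,
            Sum.elim_inl, Sum.elim_inr, Function.update_of_ne, Sum.inl.injEq, Sum.inr.injEq]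
            using hasDerivAt_const (q k) (Real.sin (q b))
      · by_cases hb : b = k
        · subst hb
          simpa only [trigDeriv, posEval, cVar, sVar, xVar, pderiv_X_self, pderiv_X_of_ne, ne_eq,
            reduceCtorEq, not_false_eq_true, mul_zero, mul_one, neg_zero, add_zero, zero_add,
            map_neg, map_one, eval_X, Sum.elim_inl, Sum.elim_inr, Function.update_self,
            Sum.inr.injEq]
            using hasDerivAt_id' (q b)
        · simpa only [trigDeriv, posEval, cVar, sVar, xVar, pderiv_X_of_ne, hb, ne_eq,
            reduceCtorEq, not_false_eq_true, mul_zero, neg_zero, add_zero, map_zero,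
            Sum.elim_inl, Sum.elim_inr, Function.update_of_ne, Sum.inl.injEq, Sum.inr.injEq]
            using hasDerivAt_const (q k) (q b)
    have h := hp.mul hv
    simp only [trigDeriv, map_add, map_neg, map_mul, eval_X, pderiv_mul,
      Function.update_eq_self] at h ⊢
    refine h.congr_deriv ?_
    ring

open MvPolynomial in
theorem add_single_mem_support_of_mem_support_pderiv {σ : Type*} {i : σ} {P : MvPolynomial σ ℝ}
    {μ : σ →₀ ℕ} (h : μ ∈ (pderiv i P).support) : μ + Finsupp.single i 1 ∈ P.support := by
  rw [mem_support_iff, coeff_pderiv] at h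
  rw [mem_support_iff]
  intro h0
  simp [h0] at h

open MvPolynomial in
/-- Each monomial of `trigDeriv k P` arises from a monomial of `P` by replacing a factor `c_k` by
`s_k`, replacing a factor `s_k` by `c_k`, or deleting a factor `x_k`; here `ρ` is the part of the
monomial left untouched by a replacement. -/
theorem mem_support_trigDeriv {n : ℕ} {k : Fin n} {P : MvPolynomial (PosVar n) ℝ}
    {μ : PosVar n →₀ ℕ} (h : μ ∈ (trigDeriv k P).support) :
    (∃ ρ, μ = Finsupp.single (sVar k) 1 + ρ ∧ ρ + Finsupp.single (cVar k) 1 ∈ P.support) ∨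
    (∃ ρ, μ = Finsupp.single (cVar k) 1 + ρ ∧ ρ + Finsupp.single (sVar k) 1 ∈ P.support) ∨
    μ + Finsupp.single (xVar k) 1 ∈ P.support := by
  classical
  rcases Finset.mem_union.1 (support_add h) with h | h
  · rcases Finset.mem_union.1 (support_add h) with h | h
    · rw [support_neg, support_X_mul] at h
      obtain ⟨ρ, hρ, rfl⟩ := Finset.mem_map.1 h
      exact Or.inl ⟨ρ, rfl, add_single_mem_support_of_mem_support_pderiv hρ⟩
    · rw [support_X_mul] at h
      obtain ⟨ρ, hρ, rfl⟩ := Finset.mem_map.1 h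
      exact Or.inr (Or.inl ⟨ρ, rfl, add_single_mem_support_of_mem_support_pderiv hρ⟩)
  · exact Or.inr (Or.inr (add_single_mem_support_of_mem_support_pderiv h))

/-- Partial differentiation preserves the constrained
trigonometric-polynomial class: if `f(q)` is the evaluation at
`c_b = cos q_b, s_b = sin q_b, x_p = q_p` of a polynomial `P` of total degree at most
`d` whose monomials satisfy `deg c_b + deg s_b ≤ D b` (`b ∈ I_r`) and `deg x_p ≤ E p`
(`p ∈ I_p`), then for every `k`, `∂f/∂q_k` is the evaluation of a polynomial `Pk` in the
same formal variables satisfying the same bounds. -/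
theorem pd_preserves_trig_poly_class
    {n : ℕ} (rev : Fin n → Bool) (d : ℕ) (D E : Fin n → ℕ)
    (P : MvPolynomial (PosVar n) ℝ)
    (hdeg : P.totalDegree ≤ d)
    (hmon : ∀ μ ∈ P.support, ∀ b : Fin n,
      μ (cVar b) + μ (sVar b) ≤ D b ∧
      μ (xVar b) ≤ E b ∧
      (rev b = false → μ (cVar b) = 0 ∧ μ (sVar b) = 0) ∧
      (rev b = true → μ (xVar b) = 0))
    (f : (Fin n → ℝ) → ℝ)
    (hf : ∀ q : Fin n → ℝ, f q = MvPolynomial.eval (posEval q) P)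
    (k : Fin n) :
    ∃ Pk : MvPolynomial (PosVar n) ℝ,
      Pk.totalDegree ≤ d ∧
      (∀ μ ∈ Pk.support, ∀ b : Fin n,
        μ (cVar b) + μ (sVar b) ≤ D b ∧
        μ (xVar b) ≤ E b ∧
        (rev b = false → μ (cVar b) = 0 ∧ μ (sVar b) = 0) ∧
        (rev b = true → μ (xVar b) = 0)) ∧
      ∀ q : Fin n → ℝ, pd f k q = MvPolynomial.eval (posEval q) Pk := by
  refine ⟨trigDeriv k P, ?_, ?_, ?_⟩
  · refine Finset.sup_le fun μ hμ => ?_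
    change μ.degree ≤ d
    rcases mem_support_trigDeriv hμ with ⟨ρ, rfl, hρ⟩ | ⟨ρ, rfl, hρ⟩ | hρ <;>
    · have h : Finsupp.degree _ ≤ d := (MvPolynomial.le_totalDegree hρ).trans hdeg
      simp only [map_add, Finsupp.degree_single] at h ⊢
      omega
  · intro μ hμ b
    rcases mem_support_trigDeriv hμ with ⟨ρ, rfl, hρ⟩ | ⟨ρ, rfl, hρ⟩ | hρ <;>
    · have h := hmon _ hρ b
      by_cases hb : k = b
      · subst hb
        cases hr : rev k <;>
          simp [cVar, sVar, xVar, hr] at h ⊢ <;> omega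
      · simpa [cVar, sVar, xVar, hb] using h
  · intro q
    have hfe : f = fun q => MvPolynomial.eval (posEval q) P := funext hf
    subst hfe
    exact (hasDerivAt_eval_posEval k q P).deriv
end
end

section
/- For every i ∈ {1,…,n}, each entry of the linear Jacobian J_i(q) ∈ ℝ^{3×n}, whose k-th column is ∂c_i/∂q_k, is a polynomial function of the augmented position variables: there exists a real multivariate polynomial in formal variables c_r, s_r (r ∈ I_r) and x_p (p ∈ I_p), of total degree at most i, whose every monomial satisfies deg(c_b) + deg(s_b) ≤ 1 for each b ∈ I_r and deg(x_p) ≤ 1 for each p ∈ I_p, and whose evaluation at c_r = cos(q_r), s_r = sin(q_r), x_p = q_p equals that entry for all q ∈ ℝ^n. -/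
/-!
The entries of `c_i` are sums of products with at most one factor per joint `b ≤ i`, that factor
being `cos q_b`, `sin q_b` (revolute) or `q_b` (prismatic): the addition formulas make the entries
of `R_z(θ_b)` and of the link translation affine in these variables, and `R_{b-1}^0` involves only
the earlier joints. The class of such functions, `JointPoly rev m` (joints of index `< m`), is built
up inductively. It is closed under partial derivatives (`JointPoly.exists_hasDerivAt`), because
differentiating a factor replaces `cos` by `-sin`, `sin` by `cos`, and `q_b` by `1`, so it never
introduces a second factor for the same joint. Each member is represented by a polynomial with the
required monomials and total degree at most `m` (`JointPoly.exists_polynomial`).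
-/

noncomputable section

open Matrix Real

/-- `IsJointVar rev b s`: the formal variable `s` is one of those attached to joint `b`, that is
`c_b` or `s_b` if `b` is revolute, and `x_b` if `b` is prismatic. -/
def IsJointVar {n : ℕ} (rev : Fin n → Bool) (b : Fin n) (s : PosVar n) : Prop :=
  (s = cVar b ∧ rev b = true) ∨ (s = sVar b ∧ rev b = true) ∨ (s = xVar b ∧ rev b = false)

/-- Functions of the configuration that are sums of constant multiples of products of evaluated
position variables, with at most one variable for each joint of (0-based) index `< m`. -/
inductive JointPoly {n : ℕ} (rev : Fin n → Bool) : ℕ → ((Fin n → ℝ) → ℝ) → Prop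
  | const (m : ℕ) (c : ℝ) : JointPoly rev m (fun _ => c)
  | add {m : ℕ} {f g : (Fin n → ℝ) → ℝ} :
      JointPoly rev m f → JointPoly rev m g → JointPoly rev m (fun q => f q + g q)
  | mul_const {m : ℕ} {f : (Fin n → ℝ) → ℝ} (c : ℝ) :
      JointPoly rev m f → JointPoly rev m (fun q => f q * c)
  | lift {m : ℕ} {f : (Fin n → ℝ) → ℝ} : JointPoly rev m f → JointPoly rev (m + 1) f
  | mul_var {f : (Fin n → ℝ) → ℝ} (b : Fin n) (s : PosVar n) :
      IsJointVar rev b s → JointPoly rev b.val f →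
        JointPoly rev (b.val + 1) (fun q => f q * posEval q s)

lemma posEval_cVar {n : ℕ} (q : Fin n → ℝ) (b : Fin n) : posEval q (cVar b) = Real.cos (q b) := rfl

lemma posEval_sVar {n : ℕ} (q : Fin n → ℝ) (b : Fin n) : posEval q (sVar b) = Real.sin (q b) := rfl

lemma posEval_xVar {n : ℕ} (q : Fin n → ℝ) (b : Fin n) : posEval q (xVar b) = q b := rfl

namespace JointPoly

variable {n : ℕ} {rev : Fin n → Bool}

lemma mono {m m' : ℕ} {f : (Fin n → ℝ) → ℝ} (hf : JointPoly rev m f) (h : m ≤ m') :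
    JointPoly rev m' f := by
  induction m', h using Nat.le_induction with
  | base => exact hf
  | succ _ _ ih => exact ih.lift

lemma sum {ι : Type*} (S : Finset ι) {m : ℕ} {f : ι → (Fin n → ℝ) → ℝ}
    (hf : ∀ j ∈ S, JointPoly rev m (f j)) : JointPoly rev m (fun q => ∑ j ∈ S, f j q) := by
  classical
  induction S using Finset.induction_on with
  | empty => simpa using JointPoly.const m 0
  | insert a S ha ih =>
    simp only [Finset.sum_insert ha]
    exact (hf a (by simp)).add (ih fun j hj => hf j (by simp [hj]))

/-- The last clause, which records that joints of index `≥ m` do not occur, is what allows the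
induction to multiply by a variable of joint `m`. -/
lemma exists_polynomial {m : ℕ} {f : (Fin n → ℝ) → ℝ} (hf : JointPoly rev m f) :
    ∃ P : MvPolynomial (PosVar n) ℝ,
      P.totalDegree ≤ m ∧
      (∀ μ ∈ P.support, ∀ b : Fin n,
        (μ (cVar b) + μ (sVar b) ≤ 1 ∧
        μ (xVar b) ≤ 1 ∧
        (rev b = false → μ (cVar b) = 0 ∧ μ (sVar b) = 0) ∧
        (rev b = true → μ (xVar b) = 0)) ∧
        (m ≤ b.val → μ (cVar b) = 0 ∧ μ (sVar b) = 0 ∧ μ (xVar b) = 0)) ∧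
      ∀ q : Fin n → ℝ, MvPolynomial.eval (posEval q) P = f q := by
  classical
  induction hf with
  | const m c =>
    refine ⟨MvPolynomial.C c, by simp, ?_, by simp⟩
    intro μ hμ b
    have h0 : μ = 0 := by
      by_contra hne
      rw [MvPolynomial.mem_support_iff, MvPolynomial.coeff_C, if_neg (Ne.symm hne)] at hμ
      exact hμ rfl
    subst h0
    simp
  | add _ _ ihf ihg =>
    obtain ⟨P, hP1, hP2, hP3⟩ := ihf
    obtain ⟨Q, hQ1, hQ2, hQ3⟩ := ihg
    refine ⟨P + Q, (MvPolynomial.totalDegree_add _ _).trans (max_le hP1 hQ1), ?_,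
      fun q => by simp [hP3, hQ3]⟩
    intro μ hμ
    rcases Finset.mem_union.1 (MvPolynomial.support_add hμ) with h | h
    · exact hP2 μ h
    · exact hQ2 μ h
  | mul_const c _ ih =>
    obtain ⟨P, hP1, hP2, hP3⟩ := ih
    refine ⟨c • P, (MvPolynomial.totalDegree_smul_le _ _).trans hP1, ?_,
      fun q => by simp [hP3, mul_comm]⟩
    intro μ hμ
    exact hP2 μ (MvPolynomial.support_smul hμ)
  | lift _ ih =>
    obtain ⟨P, hP1, hP2, hP3⟩ := ih
    exact ⟨P, hP1.trans (Nat.le_succ _),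
      fun μ hμ b => ⟨(hP2 μ hμ b).1, fun h => (hP2 μ hμ b).2 (by omega)⟩, hP3⟩
  | mul_var b s hs _ ih =>
    obtain ⟨P, hP1, hP2, hP3⟩ := ih
    refine ⟨P * MvPolynomial.X s, (MvPolynomial.totalDegree_mul _ _).trans (by simpa using hP1),
      ?_, fun q => by simp [hP3]⟩
    intro μ hμ a
    rw [MvPolynomial.support_mul_X, Finset.mem_map] at hμ
    obtain ⟨ν, hν, rfl⟩ := hμ
    have h1 := hP2 ν hν a
    by_cases hba : b = a
    · subst hba
      obtain ⟨h2, h3, h4⟩ := h1.2 le_rfl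
      rcases hs with ⟨rfl, hr⟩ | ⟨rfl, hr⟩ | ⟨rfl, hr⟩ <;>
        simp [cVar, sVar, xVar] at h2 h3 h4 ⊢ <;> simp [h2, h3, h4, hr]
    · have hle : b.val + 1 ≤ a.val → b.val ≤ a.val := fun h => by omega
      rcases hs with ⟨rfl, hr⟩ | ⟨rfl, hr⟩ | ⟨rfl, hr⟩ <;>
        simp [cVar, sVar, xVar, hba] at h1 ⊢ <;>
        exact ⟨h1.1, fun h => h1.2 (hle h)⟩

/-- Along coordinate `k`, a `JointPoly` function is differentiable, and its partial derivative is
again a `JointPoly` function of the same joints. -/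
lemma exists_hasDerivAt {m : ℕ} {f : (Fin n → ℝ) → ℝ} (hf : JointPoly rev m f) (k : Fin n) :
    ∃ g : (Fin n → ℝ) → ℝ, JointPoly rev m g ∧
      ∀ q, HasDerivAt (fun t => f (Function.update q k t)) (g q) (q k) := by
  induction hf with
  | const m c => exact ⟨_, .const m 0, fun q => hasDerivAt_const _ _⟩
  | add _ _ ihf ihg =>
    obtain ⟨f', hf', hf⟩ := ihf
    obtain ⟨g', hg', hg⟩ := ihg
    exact ⟨_, hf'.add hg', fun q => (hf q).add (hg q)⟩
  | mul_const c _ ih =>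
    obtain ⟨f', hf', hf⟩ := ih
    exact ⟨_, hf'.mul_const c, fun q => (hf q).mul_const c⟩
  | lift _ ih =>
    obtain ⟨f', hf', hf⟩ := ih
    exact ⟨f', hf'.lift, hf⟩
  | @mul_var f b s hs hF ih =>
    obtain ⟨f', hf', hf⟩ := ih
    -- For `k = b` the product rule is safe because `f` involves only joints before `b`.
    have key : ∃ v : (Fin n → ℝ) → ℝ, JointPoly rev (b.val + 1) (fun q => f q * v q) ∧
        ∀ q, HasDerivAt (fun t => posEval (Function.update q k t) s) (v q) (q k) := by
      by_cases hbk : b = k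
      · subst hbk
        rcases hs with ⟨rfl, hr⟩ | ⟨rfl, hr⟩ | ⟨rfl, hr⟩
        · refine ⟨fun q => posEval q (sVar b) * (-1), ?_, fun q => ?_⟩
          · simpa only [mul_assoc] using
              (hF.mul_var b (sVar b) (Or.inr (Or.inl ⟨rfl, hr⟩))).mul_const (-1)
          · simpa only [posEval_cVar, posEval_sVar, Function.update_self, mul_neg_one] using
              Real.hasDerivAt_cos (q b)
        · refine ⟨fun q => posEval q (cVar b), hF.mul_var b _ (Or.inl ⟨rfl, hr⟩), fun q => ?_⟩
          simpa only [posEval_cVar, posEval_sVar, Function.update_self] using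
            Real.hasDerivAt_sin (q b)
        · refine ⟨fun _ => 1, by simpa using hF.lift, fun q => ?_⟩
          simpa only [posEval_xVar, Function.update_self] using hasDerivAt_id' (q b)
      · refine ⟨fun _ => 0, by simpa using JointPoly.const (rev := rev) (b.val + 1) 0, fun q => ?_⟩
        have hc : ∀ t, posEval (Function.update q k t) s = posEval q s := by
          intro t
          rcases hs with ⟨rfl, hr⟩ | ⟨rfl, hr⟩ | ⟨rfl, hr⟩ <;>
            simp only [posEval_cVar, posEval_sVar, posEval_xVar, Function.update_of_ne hbk]
        simpa only [hc] using hasDerivAt_const (q k) (posEval q s)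
    obtain ⟨v, hv, hvd⟩ := key
    refine ⟨_, (hf'.mul_var b s hs).add hv, fun q => ?_⟩
    exact ((hf q).mul (hvd q)).congr_deriv (by simp only [Function.update_eq_self])

lemma mul_cos_dhTheta {f : (Fin n → ℝ) → ℝ} (θ0 : Fin n → ℝ) (b : Fin n)
    (hf : JointPoly rev b.val f) :
    JointPoly rev (b.val + 1) (fun q => f q * Real.cos (dhTheta rev θ0 q b)) := by
  cases hr : rev b with
  | false => simpa [dhTheta, hr] using (hf.mul_const (Real.cos (θ0 b))).lift
  | true =>
    have h := ((hf.mul_var b (cVar b) (Or.inl ⟨rfl, hr⟩)).mul_const (Real.cos (θ0 b))).add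
      ((hf.mul_var b (sVar b) (Or.inr (Or.inl ⟨rfl, hr⟩))).mul_const (-Real.sin (θ0 b)))
    convert h using 2
    simp [dhTheta, hr, Real.cos_add, posEval_cVar, posEval_sVar]
    ring

lemma mul_sin_dhTheta {f : (Fin n → ℝ) → ℝ} (θ0 : Fin n → ℝ) (b : Fin n)
    (hf : JointPoly rev b.val f) :
    JointPoly rev (b.val + 1) (fun q => f q * Real.sin (dhTheta rev θ0 q b)) := by
  cases hr : rev b with
  | false => simpa [dhTheta, hr] using (hf.mul_const (Real.sin (θ0 b))).lift
  | true =>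
    have h := ((hf.mul_var b (cVar b) (Or.inl ⟨rfl, hr⟩)).mul_const (Real.sin (θ0 b))).add
      ((hf.mul_var b (sVar b) (Or.inr (Or.inl ⟨rfl, hr⟩))).mul_const (Real.cos (θ0 b)))
    convert h using 2
    simp [dhTheta, hr, Real.sin_add, posEval_cVar, posEval_sVar]
    ring

lemma mul_dhD {f : (Fin n → ℝ) → ℝ} (d0 : Fin n → ℝ) (b : Fin n)
    (hf : JointPoly rev b.val f) :
    JointPoly rev (b.val + 1) (fun q => f q * dhD rev d0 q b) := by
  cases hr : rev b with
  | true => simpa [dhD, hr] using (hf.mul_const (d0 b)).lift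
  | false =>
    have h := (hf.mul_const (d0 b)).lift.add
      (hf.mul_var b (xVar b) (Or.inr (Or.inr ⟨rfl, hr⟩)))
    convert h using 2
    simp [dhD, hr, posEval_xVar]
    ring

lemma mul_RzMat {f : (Fin n → ℝ) → ℝ} (θ0 : Fin n → ℝ) (b : Fin n)
    (hf : JointPoly rev b.val f) (u v : Fin 3) :
    JointPoly rev (b.val + 1) (fun q => f q * RzMat (dhTheta rev θ0 q b) u v) := by
  have hc := hf.mul_cos_dhTheta θ0 b
  have hs := hf.mul_sin_dhTheta θ0 b
  have hn := hs.mul_const (-1)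
  have h0 : JointPoly rev (b.val + 1) (fun _ => 0) := .const _ 0
  have h1 := hf.lift
  fin_cases u <;> fin_cases v <;> simp [RzMat] <;> first | assumption | simpa using hn

lemma mul_dhRrel {f : (Fin n → ℝ) → ℝ} (θ0 αDH : Fin n → ℝ) (b : Fin n)
    (hf : JointPoly rev b.val f) (u v : Fin 3) :
    JointPoly rev (b.val + 1) (fun q => f q * dhRrel rev θ0 αDH q b u v) := by
  simp only [dhRrel, Matrix.mul_apply, Finset.mul_sum, ← mul_assoc]
  exact sum _ fun w _ => (hf.mul_RzMat θ0 b u w).mul_const _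

lemma dhR0_entry (θ0 αDH : Fin n → ℝ) (m : ℕ) (u v : Fin 3) :
    JointPoly rev m (fun q => dhR0 rev θ0 αDH q m u v) := by
  induction m generalizing u v with
  | zero => exact .const 0 _
  | succ m ih =>
    by_cases h : m < n
    · simp only [dhR0, h, dif_pos, Matrix.mul_apply]
      exact sum _ fun w _ => (ih u w).mul_dhRrel θ0 αDH ⟨m, h⟩ w v
    · simpa only [dhR0, h, dif_neg, not_false_eq_true, mul_one] using (ih u v).lift

lemma mul_dhLrel {f : (Fin n → ℝ) → ℝ} (θ0 d0 aDH : Fin n → ℝ) (b : Fin n)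
    (hf : JointPoly rev b.val f) (u : Fin 3) :
    JointPoly rev (b.val + 1) (fun q => f q * dhLrel rev θ0 d0 aDH q b u) := by
  simp only [dhLrel, Pi.add_apply, mul_add, Matrix.mulVec, dotProduct, Finset.mul_sum, ← mul_assoc]
  refine add ?_ (sum _ fun w _ => (hf.mul_RzMat θ0 b u w).mul_const _)
  have hd := hf.mul_dhD d0 b
  have h0 : JointPoly rev (b.val + 1) (fun _ => 0) := .const _ 0
  fin_cases u <;> simp <;> assumption

lemma dhCom_entry (θ0 d0 aDH αDH : Fin n → ℝ) (cloc : Fin n → Fin 3 → ℝ) (i : Fin n)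
    (r : Fin 3) :
    JointPoly rev (i.val + 1) (fun q => dhCom rev θ0 d0 aDH αDH cloc q i r) := by
  simp only [dhCom, Pi.add_apply, Finset.sum_apply]
  refine add (sum _ fun j _ => ?_) ?_
  · by_cases h : j ≤ i
    · simp only [h, if_true, Matrix.mulVec, dotProduct]
      have hj : j.val + 1 ≤ i.val + 1 := Nat.succ_le_succ h
      exact sum _ fun w _ => ((dhR0_entry θ0 αDH j.val r w).mul_dhLrel θ0 d0 aDH j w).mono hj
    · simpa only [h, if_false, Pi.zero_apply] using JointPoly.const (i.val + 1) 0
  · simp only [Matrix.mulVec, dotProduct]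
    exact sum _ fun w _ => (dhR0_entry θ0 αDH (i.val + 1) r w).mul_const _

end JointPoly

/-- Every entry of the linear Jacobian `J_i(q)` (whose `k`-th column is
`∂c_i/∂q_k`) is a polynomial of total degree at most `i` in the formal variables
`c_r, s_r` (`r ∈ I_r`) and `x_p` (`p ∈ I_p`), in which every monomial satisfies
`deg c_b + deg s_b ≤ 1` for every `b ∈ I_r` and `deg x_p ≤ 1` for every `p ∈ I_p`. -/
theorem jacobian_entries_polynomial
    {n : ℕ} (rev : Fin n → Bool) (θ0 d0 aDH αDH : Fin n → ℝ)
    (cloc : Fin n → Fin 3 → ℝ) (i : Fin n) (r : Fin 3) (k : Fin n) :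
    ∃ P : MvPolynomial (PosVar n) ℝ,
      P.totalDegree ≤ i.val + 1 ∧
      (∀ μ ∈ P.support, ∀ b : Fin n,
        μ (cVar b) + μ (sVar b) ≤ 1 ∧
        μ (xVar b) ≤ 1 ∧
        (rev b = false → μ (cVar b) = 0 ∧ μ (sVar b) = 0) ∧
        (rev b = true → μ (xVar b) = 0)) ∧
      ∀ q : Fin n → ℝ,
        MvPolynomial.eval (posEval q) P = dhJlin rev θ0 d0 aDH αDH cloc q i r k := by
  obtain ⟨g, hg, hd⟩ :=
    (JointPoly.dhCom_entry (rev := rev) θ0 d0 aDH αDH cloc i r).exists_hasDerivAt k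
  obtain ⟨P, hP1, hP2, hP3⟩ := hg.exists_polynomial
  exact ⟨P, hP1, fun μ hμ b => (hP2 μ hμ b).1, fun q => (hP3 q).trans (hd q).deriv.symm⟩
end
end

section
/- For every i ∈ {1,…,n}, each entry of the matrix J_i(q)^T J_i(q) ∈ ℝ^{n×n} is a polynomial function of the augmented position variables: there exists a real multivariate polynomial in formal variables c_r, s_r (r ∈ I_r) and x_p (p ∈ I_p), of total degree at most 2i, whose every monomial satisfies deg(c_b) + deg(s_b) ≤ 2 for each b ∈ I_r and deg(x_p) ≤ 2 for each p ∈ I_p, and whose evaluation at c_r = cos(q_r), s_r = sin(q_r), x_p = q_p equals that entry for all q ∈ ℝ^n. -/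
/-!
The centre of mass `c_i` is built from the entries of `R_z(θ_b)` and from the offsets `d_b` in such
a way that each joint `b ≤ i` contributes a factor of degree at most one in its own variables
(`c_b, s_b` if revolute, `x_b` if prismatic), and joints beyond `i` do not occur. This bound
survives `∂/∂q_k`, because the derivatives of `cos`, `sin` and `x` are `-sin`, `cos` and `1`.
Hence an entry of `J_iᵀ J_i`,
a sum of products of two such derivatives, has degree at most two per joint `b ≤ i`; adding up over
the joints gives the total degree `2i`.

`PolyBd rev D` expresses the bound `D b` on the degree in the variables of joint `b`, and
`DiffPolyBd rev D` the same bound for a function and all of its partial derivatives. The latter is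
closed under sums and, with bounds adding up, under products (Leibniz rule), so no derivative of a
formal polynomial is ever computed. `diffPolyBd_dhCom` applies this to `c_i`.
-/

noncomputable section

open Matrix Real

/-! ### Polynomials with a degree bound for each joint -/

/-- `f` is a polynomial in `c_r, s_r` (`r` revolute) and `x_p` (`p` prismatic) all of whose
monomials have degree at most `D b` in the variables attached to joint `b`. -/
def PolyBd {n : ℕ} (rev : Fin n → Bool) (D : Fin n → ℕ) (f : (Fin n → ℝ) → ℝ) : Prop :=
  ∃ P : MvPolynomial (PosVar n) ℝ,
    (∀ μ ∈ P.support, ∀ b : Fin n,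
      μ (cVar b) + μ (sVar b) + μ (xVar b) ≤ D b ∧
      (rev b = false → μ (cVar b) = 0 ∧ μ (sVar b) = 0) ∧
      (rev b = true → μ (xVar b) = 0)) ∧
    ∀ q : Fin n → ℝ, MvPolynomial.eval (posEval q) P = f q

namespace PolyBd

variable {n : ℕ} {rev : Fin n → Bool} {D D' : Fin n → ℕ} {f g : (Fin n → ℝ) → ℝ}

lemma mono (h : PolyBd rev D f) (hD : ∀ b, D b ≤ D' b) : PolyBd rev D' f := by
  obtain ⟨P, hP, he⟩ := h
  exact ⟨P, fun μ hμ b => ⟨(hP μ hμ b).1.trans (hD b), (hP μ hμ b).2⟩, he⟩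

lemma const (c : ℝ) : PolyBd rev D (fun _ => c) := by
  classical
  refine ⟨MvPolynomial.C c, fun μ hμ b => ?_, fun q => by simp⟩
  have h0 : μ = 0 := by
    by_contra h
    rw [MvPolynomial.mem_support_iff, MvPolynomial.coeff_C, if_neg (Ne.symm h)] at hμ
    exact hμ rfl
  simp [h0]

lemma add (hf : PolyBd rev D f) (hg : PolyBd rev D g) : PolyBd rev D (fun q => f q + g q) := by
  classical
  obtain ⟨P, hP, he⟩ := hf
  obtain ⟨Q, hQ, he'⟩ := hg
  refine ⟨P + Q, fun μ hμ b => ?_, fun q => by simp [he, he']⟩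
  rcases Finset.mem_union.1 (MvPolynomial.support_add hμ) with h | h
  · exact hP μ h b
  · exact hQ μ h b

lemma mul (hf : PolyBd rev D f) (hg : PolyBd rev D' g) :
    PolyBd rev (fun b => D b + D' b) (fun q => f q * g q) := by
  classical
  obtain ⟨P, hP, he⟩ := hf
  obtain ⟨Q, hQ, he'⟩ := hg
  refine ⟨P * Q, fun μ hμ b => ?_, fun q => by simp [he, he']⟩
  obtain ⟨μ₁, h₁, μ₂, h₂, rfl⟩ := Finset.mem_add.1 (MvPolynomial.support_mul P Q hμ)
  obtain ⟨a₁, a₂, a₃⟩ := hP μ₁ h₁ b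
  obtain ⟨b₁, b₂, b₃⟩ := hQ μ₂ h₂ b
  simp only [Finsupp.add_apply]
  refine ⟨by omega, fun h => ?_, fun h => ?_⟩
  · have := a₂ h
    have := b₂ h
    omega
  · have := a₃ h
    have := b₃ h
    omega

lemma sum {ι : Type*} (s : Finset ι) {F : ι → (Fin n → ℝ) → ℝ}
    (h : ∀ a ∈ s, PolyBd rev D (F a)) : PolyBd rev D (fun q => ∑ a ∈ s, F a q) := by
  classical
  induction s using Finset.induction_on with
  | empty => simpa using const 0
  | insert a s ha ih =>
    simp only [Finset.sum_insert ha]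
    exact (h a (Finset.mem_insert_self a s)).add
      (ih fun x hx => h x (Finset.mem_insert_of_mem hx))

lemma cos_coord {b : Fin n} (hb : rev b = true) (hD : 1 ≤ D b) :
    PolyBd rev D (fun q => Real.cos (q b)) := by
  classical
  refine ⟨MvPolynomial.X (cVar b), fun μ hμ b' => ?_, fun q => by simp [posEval, cVar]⟩
  rw [MvPolynomial.support_X, Finset.mem_singleton] at hμ
  subst hμ
  by_cases h : b = b'
  · subst h
    simp [cVar, sVar, xVar, hb, hD]
  · simp [cVar, sVar, xVar, h]

lemma sin_coord {b : Fin n} (hb : rev b = true) (hD : 1 ≤ D b) :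
    PolyBd rev D (fun q => Real.sin (q b)) := by
  classical
  refine ⟨MvPolynomial.X (sVar b), fun μ hμ b' => ?_, fun q => by simp [posEval, sVar]⟩
  rw [MvPolynomial.support_X, Finset.mem_singleton] at hμ
  subst hμ
  by_cases h : b = b'
  · subst h
    simp [cVar, sVar, xVar, hb, hD]
  · simp [cVar, sVar, xVar, h]

lemma coord {b : Fin n} (hb : rev b = false) (hD : 1 ≤ D b) :
    PolyBd rev D (fun q => q b) := by
  classical
  refine ⟨MvPolynomial.X (xVar b), fun μ hμ b' => ?_, fun q => by simp [posEval, xVar]⟩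
  rw [MvPolynomial.support_X, Finset.mem_singleton] at hμ
  subst hμ
  by_cases h : b = b'
  · subst h
    simp [cVar, sVar, xVar, hb, hD]
  · simp [cVar, sVar, xVar, h]

end PolyBd

/-! ### Degree bounds stable under partial derivatives -/

/-- `f` and each of its partial derivatives, which exist everywhere, are polynomials with degree
bound `D` in the sense of `PolyBd`. -/
def DiffPolyBd {n : ℕ} (rev : Fin n → Bool) (D : Fin n → ℕ) (f : (Fin n → ℝ) → ℝ) : Prop :=
  PolyBd rev D f ∧ ∀ k : Fin n, ∃ f' : (Fin n → ℝ) → ℝ, PolyBd rev D f' ∧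
    ∀ q : Fin n → ℝ, HasDerivAt (fun t => f (Function.update q k t)) (f' q) (q k)

namespace DiffPolyBd

variable {n : ℕ} {rev : Fin n → Bool} {D D' : Fin n → ℕ} {f g : (Fin n → ℝ) → ℝ}

lemma mono (h : DiffPolyBd rev D f) (hD : ∀ b, D b ≤ D' b) : DiffPolyBd rev D' f := by
  refine ⟨h.1.mono hD, fun k => ?_⟩
  obtain ⟨f', h', hd⟩ := h.2 k
  exact ⟨f', h'.mono hD, hd⟩

lemma const (c : ℝ) : DiffPolyBd rev D (fun _ => c) :=
  ⟨PolyBd.const c, fun _ => ⟨fun _ => 0, PolyBd.const 0, fun _ => hasDerivAt_const _ _⟩⟩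

lemma add (hf : DiffPolyBd rev D f) (hg : DiffPolyBd rev D g) :
    DiffPolyBd rev D (fun q => f q + g q) := by
  refine ⟨hf.1.add hg.1, fun k => ?_⟩
  obtain ⟨f', hf', hfd⟩ := hf.2 k
  obtain ⟨g', hg', hgd⟩ := hg.2 k
  exact ⟨_, hf'.add hg', fun q => (hfd q).add (hgd q)⟩

lemma mul (hf : DiffPolyBd rev D f) (hg : DiffPolyBd rev D' g) :
    DiffPolyBd rev (fun b => D b + D' b) (fun q => f q * g q) := by
  refine ⟨hf.1.mul hg.1, fun k => ?_⟩
  obtain ⟨f', hf', hfd⟩ := hf.2 k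
  obtain ⟨g', hg', hgd⟩ := hg.2 k
  refine ⟨_, (hf'.mul hg.1).add (hf.1.mul hg'), fun q => ?_⟩
  have h := (hfd q).mul (hgd q)
  simp only [Function.update_eq_self] at h
  exact h

lemma const_mul (c : ℝ) (hf : DiffPolyBd rev D f) : DiffPolyBd rev D (fun q => c * f q) :=
  ((const (D := fun _ => 0) c).mul hf).mono fun b => by simp

lemma sum {ι : Type*} (s : Finset ι) {F : ι → (Fin n → ℝ) → ℝ}
    (h : ∀ a ∈ s, DiffPolyBd rev D (F a)) : DiffPolyBd rev D (fun q => ∑ a ∈ s, F a q) := by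
  classical
  induction s using Finset.induction_on with
  | empty => simpa using const 0
  | insert a s ha ih =>
    simp only [Finset.sum_insert ha]
    exact (h a (Finset.mem_insert_self a s)).add
      (ih fun x hx => h x (Finset.mem_insert_of_mem hx))

/-- A function of the single coordinate `q_b` only needs its ordinary derivative bounded: the other
partial derivatives vanish. -/
lemma of_coord {b : Fin n} {φ φ' : ℝ → ℝ} (h : PolyBd rev D (fun q => φ (q b)))
    (h' : PolyBd rev D (fun q => φ' (q b))) (hd : ∀ t, HasDerivAt φ (φ' t) t) :
    DiffPolyBd rev D (fun q => φ (q b)) := by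
  refine ⟨h, fun k => ?_⟩
  by_cases hk : b = k
  · subst hk
    exact ⟨_, h', fun q => by simpa using hd (q b)⟩
  · exact ⟨fun _ => 0, PolyBd.const 0, fun q => by simpa [hk] using hasDerivAt_const (q k) (φ (q b))⟩

lemma cos_coord {b : Fin n} (hb : rev b = true) (hD : 1 ≤ D b) :
    DiffPolyBd rev D (fun q => Real.cos (q b)) := by
  refine of_coord (φ' := fun t => -1 * Real.sin t) (PolyBd.cos_coord hb hD) ?_
    fun t => by simpa using Real.hasDerivAt_cos t
  exact ((PolyBd.const (D := fun _ => 0) (-1)).mul (PolyBd.sin_coord hb hD)).mono fun b => by simp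

lemma sin_coord {b : Fin n} (hb : rev b = true) (hD : 1 ≤ D b) :
    DiffPolyBd rev D (fun q => Real.sin (q b)) :=
  of_coord (PolyBd.sin_coord hb hD) (PolyBd.cos_coord hb hD) Real.hasDerivAt_sin

lemma coord {b : Fin n} (hb : rev b = false) (hD : 1 ≤ D b) :
    DiffPolyBd rev D (fun q => q b) :=
  of_coord (φ := fun t => t) (PolyBd.coord hb hD) (PolyBd.const 1) hasDerivAt_id

lemma cos_theta (θ0 : Fin n → ℝ) {b : Fin n} (hD : 1 ≤ D b) :
    DiffPolyBd rev D (fun q => Real.cos (dhTheta rev θ0 q b)) := by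
  cases hb : rev b with
  | false => simpa [dhTheta, hb] using const (Real.cos (θ0 b))
  | true =>
    have h := ((cos_coord hb hD).const_mul (Real.cos (θ0 b))).add
      ((sin_coord hb hD).const_mul (-Real.sin (θ0 b)))
    simpa [dhTheta, hb, Real.cos_add, sub_eq_add_neg] using h

lemma sin_theta (θ0 : Fin n → ℝ) {b : Fin n} (hD : 1 ≤ D b) :
    DiffPolyBd rev D (fun q => Real.sin (dhTheta rev θ0 q b)) := by
  cases hb : rev b with
  | false => simpa [dhTheta, hb] using const (Real.sin (θ0 b))
  | true =>
    have h := ((cos_coord hb hD).const_mul (Real.sin (θ0 b))).add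
      ((sin_coord hb hD).const_mul (Real.cos (θ0 b)))
    simpa [dhTheta, hb, Real.sin_add, add_comm] using h

lemma dhD_entry (d0 : Fin n → ℝ) {b : Fin n} (hD : 1 ≤ D b) :
    DiffPolyBd rev D (fun q => dhD rev d0 q b) := by
  cases hb : rev b with
  | false => simpa [dhD, hb] using (const (d0 b)).add (coord hb hD)
  | true => simpa [dhD, hb] using const (d0 b)

lemma RzMat_entry (θ0 : Fin n → ℝ) {b : Fin n} (hD : 1 ≤ D b) (r s : Fin 3) :
    DiffPolyBd rev D (fun q => RzMat (dhTheta rev θ0 q b) r s) := by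
  have hc := cos_theta (rev := rev) θ0 hD
  have hs := sin_theta (rev := rev) θ0 hD
  have hs' : DiffPolyBd rev D (fun q => -Real.sin (dhTheta rev θ0 q b)) := by
    simpa using hs.const_mul (-1)
  fin_cases r <;> fin_cases s <;> simp [RzMat] <;> first | assumption | exact const _

lemma dhRrel_entry (θ0 αDH : Fin n → ℝ) {b : Fin n} (hD : 1 ≤ D b) (r s : Fin 3) :
    DiffPolyBd rev D (fun q => dhRrel rev θ0 αDH q b r s) := by
  simp only [dhRrel, Matrix.mul_apply]
  refine sum _ fun t _ => ?_
  simpa [mul_comm] using (RzMat_entry θ0 hD r t).const_mul (RxMat (αDH b) t s)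

lemma dhLrel_entry (θ0 d0 aDH : Fin n → ℝ) {b : Fin n} (hD : 1 ≤ D b) (r : Fin 3) :
    DiffPolyBd rev D (fun q => dhLrel rev θ0 d0 aDH q b r) := by
  simp only [dhLrel, Pi.add_apply, Matrix.mulVec, dotProduct]
  refine add ?_ (sum _ fun t _ => ?_)
  · have h := dhD_entry (rev := rev) d0 hD
    fin_cases r <;> simp <;> first | assumption | exact const _
  · simpa [mul_comm] using (RzMat_entry θ0 hD r t).const_mul (![aDH b, 0, 0] t)

end DiffPolyBd

/-! ### Degree bounds for the kinematics -/

/-- The degree bound allowing degree one for each of the first `m` joints and zero beyond. -/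
def firstJoints {n : ℕ} (m : ℕ) (b : Fin n) : ℕ := if b.val < m then 1 else 0

/-- The degree bound allowing degree one for the joint with (0-based) index `m` only. -/
def onlyJoint {n : ℕ} (m : ℕ) (b : Fin n) : ℕ := if b.val = m then 1 else 0

lemma firstJoints_add_onlyJoint_le {n m m' : ℕ} (h : m + 1 ≤ m') (b : Fin n) :
    firstJoints m b + onlyJoint m b ≤ firstJoints m' b := by
  unfold firstJoints onlyJoint
  split_ifs <;> omega

lemma diffPolyBd_dhR0 {n : ℕ} (rev : Fin n → Bool) (θ0 αDH : Fin n → ℝ) (m : ℕ) (r s : Fin 3) :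
    DiffPolyBd rev (firstJoints m) (fun q => dhR0 rev θ0 αDH q m r s) := by
  induction m generalizing r s with
  | zero => exact DiffPolyBd.const _
  | succ m ih =>
    simp only [dhR0, Matrix.mul_apply]
    refine DiffPolyBd.sum _ fun t _ => ?_
    refine DiffPolyBd.mono (D := fun b => firstJoints m b + onlyJoint m b) ((ih r t).mul ?_)
      (firstJoints_add_onlyJoint_le le_rfl)
    by_cases h : m < n
    · simpa [h] using DiffPolyBd.dhRrel_entry (rev := rev) (D := onlyJoint m) θ0 αDH
        (b := ⟨m, h⟩) (by simp [onlyJoint]) t s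
    · simpa [h] using DiffPolyBd.const _

lemma diffPolyBd_dhCom {n : ℕ} (rev : Fin n → Bool) (θ0 d0 aDH αDH : Fin n → ℝ)
    (cloc : Fin n → Fin 3 → ℝ) (i : Fin n) (r : Fin 3) :
    DiffPolyBd rev (firstJoints (i.val + 1))
      (fun q => dhCom rev θ0 d0 aDH αDH cloc q i r) := by
  simp only [dhCom, Pi.add_apply, Finset.sum_apply]
  refine DiffPolyBd.add (DiffPolyBd.sum _ fun j _ => ?_) ?_
  · by_cases hj : j ≤ i
    · simp only [hj, if_true, Matrix.mulVec, dotProduct]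
      refine DiffPolyBd.sum _ fun t _ => ?_
      refine DiffPolyBd.mono ((diffPolyBd_dhR0 rev θ0 αDH j.val r t).mul
        (DiffPolyBd.dhLrel_entry (D := onlyJoint j.val) θ0 d0 aDH (by simp [onlyJoint]) t)) ?_
      exact firstJoints_add_onlyJoint_le (Nat.succ_le_succ hj)
    · simpa [hj] using DiffPolyBd.const 0
  · simp only [Matrix.mulVec, dotProduct]
    refine DiffPolyBd.sum _ fun t _ => ?_
    simpa [mul_comm] using (diffPolyBd_dhR0 rev θ0 αDH (i.val + 1) r t).const_mul (cloc i t)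

lemma polyBd_dhJlin {n : ℕ} (rev : Fin n → Bool) (θ0 d0 aDH αDH : Fin n → ℝ)
    (cloc : Fin n → Fin 3 → ℝ) (i : Fin n) (r : Fin 3) (k : Fin n) :
    PolyBd rev (firstJoints (i.val + 1))
      (fun q => dhJlin rev θ0 d0 aDH αDH cloc q i r k) := by
  obtain ⟨f', hf', hd⟩ := (diffPolyBd_dhCom rev θ0 d0 aDH αDH cloc i r).2 k
  have : (fun q => dhJlin rev θ0 d0 aDH αDH cloc q i r k) = f' := by
    funext q
    exact (hd q).deriv
  rwa [this]

lemma sum_firstJoints_le {n : ℕ} (m : ℕ) : ∑ b : Fin n, firstJoints m b ≤ m := by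
  unfold firstJoints
  rw [Fin.sum_univ_eq_sum_range (fun b => if b < m then 1 else 0) n, ← Finset.card_filter]
  calc _ ≤ (Finset.range m).card := Finset.card_le_card fun x hx => by
        simpa using (Finset.mem_filter.1 hx).2
    _ = m := Finset.card_range m

/-- Every entry of `J_i(q)ᵀ J_i(q)` is a polynomial of total degree at
most `2i` in the formal variables `c_r, s_r` (`r ∈ I_r`) and `x_p` (`p ∈ I_p`), in which
every monomial satisfies `deg c_b + deg s_b ≤ 2` for every `b ∈ I_r` and `deg x_p ≤ 2`
for every `p ∈ I_p`. -/
theorem jacobian_gram_entries_polynomial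
    {n : ℕ} (rev : Fin n → Bool) (θ0 d0 aDH αDH : Fin n → ℝ)
    (cloc : Fin n → Fin 3 → ℝ) (i : Fin n) (j k : Fin n) :
    ∃ P : MvPolynomial (PosVar n) ℝ,
      P.totalDegree ≤ 2 * (i.val + 1) ∧
      (∀ μ ∈ P.support, ∀ b : Fin n,
        μ (cVar b) + μ (sVar b) ≤ 2 ∧
        μ (xVar b) ≤ 2 ∧
        (rev b = false → μ (cVar b) = 0 ∧ μ (sVar b) = 0) ∧
        (rev b = true → μ (xVar b) = 0)) ∧
      ∀ q : Fin n → ℝ,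
        MvPolynomial.eval (posEval q) P
          = ((dhJlin rev θ0 d0 aDH αDH cloc q i)ᵀ * dhJlin rev θ0 d0 aDH αDH cloc q i) j k := by
  obtain ⟨P, hP, he⟩ : PolyBd rev (fun b => firstJoints (i.val + 1) b + firstJoints (i.val + 1) b)
      (fun q => ((dhJlin rev θ0 d0 aDH αDH cloc q i)ᵀ * dhJlin rev θ0 d0 aDH αDH cloc q i) j k) := by
    simp only [Matrix.mul_apply, Matrix.transpose_apply]
    exact PolyBd.sum _ fun r _ => (polyBd_dhJlin rev θ0 d0 aDH αDH cloc i r j).mul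
      (polyBd_dhJlin rev θ0 d0 aDH αDH cloc i r k)
  refine ⟨P, ?_, fun μ hμ b => ?_, he⟩
  · refine Finset.sup_le fun μ hμ => ?_
    -- The degree of a monomial is the sum over the joints of its degree in each joint's variables.
    calc (μ.sum fun _ e => e) = ∑ v : PosVar n, μ v := Finsupp.sum_fintype _ _ fun _ => rfl
      _ = ∑ b : Fin n, (μ (cVar b) + μ (sVar b) + μ (xVar b)) := by
        simp [Fintype.sum_sum_type, Finset.sum_add_distrib, cVar, sVar, xVar, add_assoc]
      _ ≤ ∑ b : Fin n, (firstJoints (i.val + 1) b + firstJoints (i.val + 1) b) :=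
        Finset.sum_le_sum fun b _ => (hP μ hμ b).1
      _ ≤ 2 * (i.val + 1) := by
        rw [Finset.sum_add_distrib]
        have := sum_firstJoints_le (n := n) (i.val + 1)
        omega
  · obtain ⟨h₁, h₂⟩ := hP μ hμ b
    have h : firstJoints (i.val + 1) b ≤ 1 := by
      unfold firstJoints
      split_ifs <;> simp
    dsimp only at h₁
    exact ⟨by omega, by omega, h₂⟩
end
end

section
/- Angular velocity of the Denavit–Hartenberg rotation chain: let q : ℝ → ℝ^n be differentiable. Then for every i ∈ {1,…,n} and every t, (d/dt R_i^0(q(t))) · (R_i^0(q(t)))^T = S( J_{ω,i}(q(t)) q̇(t) ), where S(v) ∈ ℝ^{3×3} denotes the skew-symmetric cross-product matrix of v ∈ ℝ^3 (i.e., S(v) u = v × u for all u ∈ ℝ^3). -/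
/-!
With `ω_k = ∑_{j ≤ k} λ_j q̇_j R_{j-1}^0 e₃`, induction on the chain length shows
`d/dt R_k^0 = S(ω_k) R_k^0` entrywise. In the step the product rule gives
`S(ω_k) R_k^0 A + R_k^0 (c S(e₃) A)`, where `A` is the next relative rotation and `c` the rate of
its joint angle (`hasDerivAt_dhRrel`), and the equivariance `R S(v) = S(R v) R` moves `S(e₃)` to the
left of `R_k^0` (`dhR0_mul_skewMat`). Multiplying by `(R_i^0)ᵀ` on the right and using
orthogonality (`dhR0_mul_transpose`) gives the theorem, since `ω_i = J_{ω,i} q̇`.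

The equivariance and the orthogonality are checked for the elementary rotations and pass to
products, so no determinant is needed.
-/

noncomputable section

open Matrix Real

/-- The skew-symmetric cross-product matrix `S(v)`, with `S(v) u = v × u`. -/
def skewMat (v : Fin 3 → ℝ) : Matrix (Fin 3) (Fin 3) ℝ :=
  !![0, -v 2, v 1;
     v 2, 0, -v 0;
     -v 1, v 0, 0]

theorem RzMat_mul_transpose (θ : ℝ) : RzMat θ * (RzMat θ)ᵀ = 1 := by
  have h := Real.sin_sq_add_cos_sq θ
  ext r s
  fin_cases r <;> fin_cases s <;>
    simp [RzMat, Matrix.mul_apply, Fin.sum_univ_three] <;> linarith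

theorem RxMat_mul_transpose (θ : ℝ) : RxMat θ * (RxMat θ)ᵀ = 1 := by
  have h := Real.sin_sq_add_cos_sq θ
  ext r s
  fin_cases r <;> fin_cases s <;>
    simp [RxMat, Matrix.mul_apply, Fin.sum_univ_three] <;> linarith

theorem RzMat_mul_skewMat (θ : ℝ) (v : Fin 3 → ℝ) :
    RzMat θ * skewMat v = skewMat (RzMat θ *ᵥ v) * RzMat θ := by
  have h := Real.sin_sq_add_cos_sq θ
  ext r s
  fin_cases r <;> fin_cases s <;>
    simp [RzMat, skewMat, Matrix.mul_apply, Matrix.mulVec, dotProduct, Fin.sum_univ_three] <;>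
    grind

theorem RxMat_mul_skewMat (θ : ℝ) (v : Fin 3 → ℝ) :
    RxMat θ * skewMat v = skewMat (RxMat θ *ᵥ v) * RxMat θ := by
  have h := Real.sin_sq_add_cos_sq θ
  ext r s
  fin_cases r <;> fin_cases s <;>
    simp [RxMat, skewMat, Matrix.mul_apply, Matrix.mulVec, dotProduct, Fin.sum_univ_three] <;>
    grind

theorem mul_transpose_mul {A B : Matrix (Fin 3) (Fin 3) ℝ} (hA : A * Aᵀ = 1) (hB : B * Bᵀ = 1) :
    (A * B) * (A * B)ᵀ = 1 := by
  rw [Matrix.transpose_mul, Matrix.mul_assoc, ← Matrix.mul_assoc B, hB, Matrix.one_mul, hA]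

theorem mul_skewMat_mul {A B : Matrix (Fin 3) (Fin 3) ℝ}
    (hA : ∀ v, A * skewMat v = skewMat (A *ᵥ v) * A)
    (hB : ∀ v, B * skewMat v = skewMat (B *ᵥ v) * B) (v : Fin 3 → ℝ) :
    (A * B) * skewMat v = skewMat ((A * B) *ᵥ v) * (A * B) := by
  rw [Matrix.mul_assoc, hB, ← Matrix.mul_assoc, hA, Matrix.mul_assoc, Matrix.mulVec_mulVec]

theorem dhR0_mul_transpose {n : ℕ} (rev : Fin n → Bool) (θ0 αDH q : Fin n → ℝ) (k : ℕ) :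
    dhR0 rev θ0 αDH q k * (dhR0 rev θ0 αDH q k)ᵀ = 1 := by
  induction k with
  | zero => simp [dhR0]
  | succ k ih =>
    rw [dhR0]
    refine mul_transpose_mul ih ?_
    split_ifs
    · exact mul_transpose_mul (RzMat_mul_transpose _) (RxMat_mul_transpose _)
    · simp

/-- Equivariance of the cross product under the rotations of the chain. -/
theorem dhR0_mul_skewMat {n : ℕ} (rev : Fin n → Bool) (θ0 αDH q : Fin n → ℝ) (k : ℕ)
    (v : Fin 3 → ℝ) :
    dhR0 rev θ0 αDH q k * skewMat v
      = skewMat (dhR0 rev θ0 αDH q k *ᵥ v) * dhR0 rev θ0 αDH q k := by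
  induction k generalizing v with
  | zero => simp [dhR0]
  | succ k ih =>
    rw [dhR0]
    refine mul_skewMat_mul ih (fun v => ?_) v
    split_ifs
    · exact mul_skewMat_mul (RzMat_mul_skewMat _) (RxMat_mul_skewMat _) v
    · simp

theorem skewMat_add (v w : Fin 3 → ℝ) : skewMat (v + w) = skewMat v + skewMat w := by
  ext r s
  fin_cases r <;> fin_cases s <;> simp [skewMat] <;> ring

theorem skewMat_smul (c : ℝ) (v : Fin 3 → ℝ) : skewMat (c • v) = c • skewMat v := by
  ext r s
  fin_cases r <;> fin_cases s <;> simp [skewMat]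

/-- Product rule for matrices differentiated entry by entry. -/
theorem hasDerivAt_matrix_mul {A B : ℝ → Matrix (Fin 3) (Fin 3) ℝ}
    {A' B' : Matrix (Fin 3) (Fin 3) ℝ} {t : ℝ}
    (hA : ∀ r s, HasDerivAt (fun u => A u r s) (A' r s) t)
    (hB : ∀ r s, HasDerivAt (fun u => B u r s) (B' r s) t) (r s : Fin 3) :
    HasDerivAt (fun u => (A u * B u) r s) ((A' * B t + A t * B') r s) t := by
  simp only [Matrix.add_apply, Matrix.mul_apply, ← Finset.sum_add_distrib]
  exact HasDerivAt.fun_sum fun j _ => (hA r j).mul (hB j s)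

theorem hasDerivAt_RzMat {f : ℝ → ℝ} {c t : ℝ} (hf : HasDerivAt f c t) (r s : Fin 3) :
    HasDerivAt (fun u => RzMat (f u) r s) ((c • (skewMat ![0, 0, 1] * RzMat (f t))) r s) t := by
  have hs := hf.sin
  have hc := hf.cos
  have hn := hs.fun_neg
  fin_cases r <;> fin_cases s <;>
    simp [RzMat, skewMat, hasDerivAt_const] <;>
    grind

/-- Each relative rotation turns about its own `e₃` at the rate `λ_b q̇_b`. -/
theorem hasDerivAt_dhRrel {n : ℕ} (rev : Fin n → Bool) (θ0 αDH : Fin n → ℝ)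
    (q : ℝ → Fin n → ℝ) (hq : ∀ b : Fin n, Differentiable ℝ fun t => q t b)
    (b : Fin n) (t : ℝ) (r s : Fin 3) :
    HasDerivAt (fun u => dhRrel rev θ0 αDH (q u) b r s)
      ((((if rev b then (1 : ℝ) else 0) * deriv (fun u => q u b) t) •
        (skewMat ![0, 0, 1] * dhRrel rev θ0 αDH (q t) b)) r s) t := by
  have hθ : HasDerivAt (fun u => dhTheta rev θ0 (q u) b)
      ((if rev b then (1 : ℝ) else 0) * deriv (fun u => q u b) t) t := by
    unfold dhTheta
    cases rev b
    · simpa using hasDerivAt_const t (θ0 b)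
    · simpa using (hq b t).hasDerivAt
  have h := hasDerivAt_matrix_mul (B := fun _ => RxMat (αDH b)) (B' := 0) (hasDerivAt_RzMat hθ)
    (fun r s => hasDerivAt_const t _) r s
  simpa only [dhRrel, Matrix.mul_zero, add_zero, Matrix.smul_mul, Matrix.mul_assoc] using h

/-- Angular velocity of the first `k` joints at configuration `q` with joint velocities `qd`:
the sum of `λ_j q̇_j R_{j-1}^0 e₃` (joint `j` having the 0-based index `j - 1`). -/
def dhOmega {n : ℕ} (rev : Fin n → Bool) (θ0 αDH q qd : Fin n → ℝ) (k : ℕ) : Fin 3 → ℝ :=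
  ∑ j : Fin n, if j.val < k then
    ((if rev j then (1 : ℝ) else 0) * qd j) • (dhR0 rev θ0 αDH q j.val *ᵥ ![0, 0, 1]) else 0

theorem dhOmega_succ {n : ℕ} (rev : Fin n → Bool) (θ0 αDH q qd : Fin n → ℝ) (b : Fin n) :
    dhOmega rev θ0 αDH q qd (b.val + 1) = dhOmega rev θ0 αDH q qd b.val +
      ((if rev b then (1 : ℝ) else 0) * qd b) • (dhR0 rev θ0 αDH q b.val *ᵥ ![0, 0, 1]) := by
  unfold dhOmega
  rw [← Finset.sum_ite_eq_of_mem' Finset.univ b (fun j : Fin n =>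
    ((if rev j then (1 : ℝ) else 0) * qd j) • (dhR0 rev θ0 αDH q j.val *ᵥ ![0, 0, 1]))
    (Finset.mem_univ b), ← Finset.sum_add_distrib]
  refine Finset.sum_congr rfl fun j _ => ?_
  rcases lt_trichotomy j.val b.val with h | h | h
  · have : j ≠ b := by rintro rfl; exact lt_irrefl _ h
    simp [h, this, Nat.lt_succ_of_lt h]
  · obtain rfl := Fin.ext h
    simp
  · have : j ≠ b := by rintro rfl; exact lt_irrefl _ h
    simp [this, show ¬ j.val < b.val + 1 by omega, show ¬ j.val < b.val by omega]

theorem dhJang_mulVec {n : ℕ} (rev : Fin n → Bool) (θ0 αDH q qd : Fin n → ℝ) (i : Fin n) :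
    dhJang rev θ0 αDH q i *ᵥ qd = dhOmega rev θ0 αDH q qd (i.val + 1) := by
  ext r
  simp only [dhOmega, Finset.sum_apply]
  change ∑ j, dhJang rev θ0 αDH q i r j * qd j = _
  refine Finset.sum_congr rfl fun j _ => ?_
  by_cases h : j ≤ i
  · have hlt : j.val < i.val + 1 := Nat.lt_succ_of_le h
    simp only [dhJang, Matrix.of_apply, if_pos h, if_pos hlt, Pi.smul_apply, smul_eq_mul]
    ring
  · have hlt : ¬ j.val < i.val + 1 := fun hlt => h (Nat.le_of_lt_succ hlt)
    simp [dhJang, h, hlt]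

/-- The rotation of the first `k` joints satisfies `Ṙ = S(ω_k) R`. -/
theorem hasDerivAt_dhR0 {n : ℕ} (rev : Fin n → Bool) (θ0 αDH : Fin n → ℝ)
    (q : ℝ → Fin n → ℝ) (hq : ∀ b : Fin n, Differentiable ℝ fun t => q t b)
    (t : ℝ) (k : ℕ) (hk : k ≤ n) (r s : Fin 3) :
    HasDerivAt (fun u => dhR0 rev θ0 αDH (q u) k r s)
      ((skewMat (dhOmega rev θ0 αDH (q t) (fun b => deriv (fun u => q u b) t) k) *
        dhR0 rev θ0 αDH (q t) k) r s) t := by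
  induction k generalizing r s with
  | zero =>
    have h0 : skewMat (dhOmega rev θ0 αDH (q t) (fun b => deriv (fun u => q u b) t) 0) = 0 := by
      ext r s
      fin_cases r <;> fin_cases s <;> simp [dhOmega, skewMat]
    rw [h0, Matrix.zero_mul]
    exact hasDerivAt_const t _
  | succ k ih =>
    have hk' : k < n := hk
    have h := hasDerivAt_matrix_mul (ih hk'.le)
      (hasDerivAt_dhRrel rev θ0 αDH q hq ⟨k, hk'⟩ t) r s
    have hR : ∀ u, dhR0 rev θ0 αDH (q u) (k + 1)
        = dhR0 rev θ0 αDH (q u) k * dhRrel rev θ0 αDH (q u) ⟨k, hk'⟩ := fun u => by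
      rw [dhR0, dif_pos hk']
    simp only [hR]
    convert h using 2
    rw [dhOmega_succ rev θ0 αDH _ _ ⟨k, hk'⟩, skewMat_add, skewMat_smul, Matrix.add_mul,
      Matrix.mul_smul, Matrix.smul_mul, ← Matrix.mul_assoc (dhR0 rev θ0 αDH (q t) k),
      dhR0_mul_skewMat, Matrix.mul_assoc, Matrix.mul_assoc]

/-- Angular velocity of the Denavit–Hartenberg rotation chain: for a
differentiable trajectory `q : ℝ → ℝⁿ`, every `i` and every `t`,
`(d/dt R_i^0(q(t))) (R_i^0(q(t)))ᵀ = S( J_{ω,i}(q(t)) q̇(t) )`. -/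
theorem dh_angular_velocity
    {n : ℕ} (rev : Fin n → Bool) (θ0 αDH : Fin n → ℝ)
    (q : ℝ → Fin n → ℝ) (hq : ∀ b : Fin n, Differentiable ℝ fun t => q t b)
    (i : Fin n) (t : ℝ) :
    (Matrix.of fun r s : Fin 3 =>
        deriv (fun u => dhR0 rev θ0 αDH (q u) (i.val + 1) r s) t)
      * (dhR0 rev θ0 αDH (q t) (i.val + 1))ᵀ
    = skewMat
        ((dhJang rev θ0 αDH (q t) i).mulVec fun b => deriv (fun u => q u b) t) := by
  have hd : (Matrix.of fun r s : Fin 3 =>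
        deriv (fun u => dhR0 rev θ0 αDH (q u) (i.val + 1) r s) t)
      = skewMat (dhOmega rev θ0 αDH (q t) (fun b => deriv (fun u => q u b) t) (i.val + 1)) *
        dhR0 rev θ0 αDH (q t) (i.val + 1) := by
    ext r s
    exact (hasDerivAt_dhR0 rev θ0 αDH q hq t (i.val + 1) i.isLt r s).deriv
  rw [hd, Matrix.mul_assoc, dhR0_mul_transpose, Matrix.mul_one, dhJang_mulVec]
end
end
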